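/- arXiv:1603.09131 — 13 statements merged into one kernel-verified Lean document; each statement's English description precedes it below -/
import Mathlib

section
/- Let n ≥ 2 be an integer, c a real constant, and u : ℝ → ℝ a smooth function with u'(t) > 0 and u''(t) > 0 for all t ∈ ℝ. Define v(t) = n·t − (n−1)·log u'(t) − log u''(t). If (n−1)·v'(t)/u'(t) + v''(t)/u''(t) = c for all t ∈ ℝ, then there exist real constants c₁ and c₂ such that u'(t)^n − u'(t)^(n−1)·u''(t) = (c/(n(n+1)))·u'(t)^(n+1) + c₁·u'(t) + c₂ for all t ∈ ℝ. -/
/-!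
Write `φ = u'`. Since `(φᵏ w)' = φᵏ φ' (k w / φ + w' / φ')`, the factor `φⁿ⁻¹ φ'` makes the scalar
curvature equation exact: it becomes `(φⁿ⁻¹ v')' = c φⁿ⁻¹ φ'`, which integrates to
`φⁿ⁻¹ v' = (c / n) φⁿ + c₁`. On the other hand `v' = n - (n - 1) φ' / φ - φ'' / φ'` says exactly
that `(φⁿ - φⁿ⁻¹ φ')' = φⁿ⁻¹ v' φ' = ((c / n) φⁿ + c₁) φ'`, and a second integration gives the
first-order equation.
-/

section Derivative

variable {𝕜 : Type*} [NontriviallyNormedField 𝕜]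

theorem hasDerivAt_deriv_of_contDiffOn {F : Type*} [NormedAddCommGroup F] [NormedSpace 𝕜 F]
    {s : Set 𝕜} {f : 𝕜 → F} (hf : ContDiffOn 𝕜 2 f s) (hs : IsOpen s) {t : 𝕜} (ht : t ∈ s) :
    HasDerivAt (deriv f) (deriv (deriv f) t) t :=
  ((hf.deriv_of_isOpen hs (m := 1) (by norm_num)).differentiableOn one_ne_zero
    |>.differentiableAt (hs.mem_nhds ht)).hasDerivAt

theorem hasDerivAt_const_div_mul_pow_succ [CharZero 𝕜] {φ : 𝕜 → 𝕜} {φ' t : 𝕜}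
    (hφ : HasDerivAt φ φ' t) (a : 𝕜) (k : ℕ) :
    HasDerivAt (fun x ↦ a / (k + 1) * φ x ^ (k + 1)) (a * φ t ^ k * φ') t := by
  have hk : (k + 1 : 𝕜) ≠ 0 := Nat.cast_add_one_ne_zero k
  refine ((hφ.fun_pow (k + 1)).const_mul (a / (k + 1))).congr_deriv ?_
  rw [Nat.add_sub_cancel]
  push_cast
  field_simp

theorem hasDerivAt_pow_mul {φ w : 𝕜 → 𝕜} {φ' w' t : 𝕜} (hφ : HasDerivAt φ φ' t)
    (hw : HasDerivAt w w' t) (hφ0 : φ t ≠ 0) (k : ℕ) :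
    HasDerivAt (fun x ↦ φ x ^ k * w x) (φ t ^ k * (k * φ' / φ t * w t + w')) t := by
  refine ((hφ.fun_pow k).fun_mul hw).congr_deriv ?_
  cases k with
  | zero => simp
  | succ k =>
    rw [Nat.add_sub_cancel]
    field_simp
    ring

theorem hasDerivAt_pow_succ_sub_pow_mul_deriv {φ φ' : 𝕜 → 𝕜} {φ'' t : 𝕜}
    (hφ : HasDerivAt φ (φ' t) t) (hφ' : HasDerivAt φ' φ'' t) (hφ0 : φ t ≠ 0) (hφ'0 : φ' t ≠ 0)
    (k : ℕ) :
    HasDerivAt (fun x ↦ φ x ^ (k + 1) - φ x ^ k * φ' x)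
      (φ t ^ k * (k + 1 - k * (φ' t / φ t) - φ'' / φ' t) * φ' t) t := by
  refine ((hφ.fun_pow (k + 1)).fun_sub (hasDerivAt_pow_mul hφ hφ' hφ0 k)).congr_deriv ?_
  rw [Nat.add_sub_cancel]
  push_cast
  field_simp
  ring

end Derivative

section Integration

variable {𝕜 : Type*} [RCLike 𝕜] {s : Set 𝕜}

theorem exists_eq_add_const_of_hasDerivAt {F : Type*} [NormedAddCommGroup F]
    [NormedSpace 𝕜 F] {f g f' : 𝕜 → F} (hs : IsOpen s) (hs' : IsPreconnected s)
    (hf : ∀ t ∈ s, HasDerivAt f (f' t) t) (hg : ∀ t ∈ s, HasDerivAt g (f' t) t) :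
    ∃ a, ∀ t ∈ s, f t = g t + a :=
  hs.exists_eq_add_of_deriv_eq hs'
    (fun t ht ↦ (hf t ht).differentiableAt.differentiableWithinAt)
    (fun t ht ↦ (hg t ht).differentiableAt.differentiableWithinAt)
    fun t ht ↦ (hf t ht).deriv.trans (hg t ht).deriv.symm

theorem exists_pow_mul_eq_of_mul_div_add_div_eq {φ φ' w w' : 𝕜 → 𝕜} {k : ℕ} {c : 𝕜}
    (hs : IsOpen s) (hs' : IsPreconnected s) (hφ : ∀ t ∈ s, HasDerivAt φ (φ' t) t)
    (hw : ∀ t ∈ s, HasDerivAt w (w' t) t) (hφ0 : ∀ t ∈ s, φ t ≠ 0) (hφ'0 : ∀ t ∈ s, φ' t ≠ 0)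
    (h : ∀ t ∈ s, k * w t / φ t + w' t / φ' t = c) :
    ∃ c₁, ∀ t ∈ s, φ t ^ k * w t = c / (k + 1) * φ t ^ (k + 1) + c₁ := by
  refine exists_eq_add_const_of_hasDerivAt hs hs' (f' := fun t ↦ c * φ t ^ k * φ' t)
    (fun t ht ↦ (hasDerivAt_pow_mul (hφ t ht) (hw t ht) (hφ0 t ht) k).congr_deriv ?_)
    fun t ht ↦ hasDerivAt_const_div_mul_pow_succ (hφ t ht) c k
  have := hφ0 t ht
  have := hφ'0 t ht
  rw [← h t ht]
  field_simp

theorem exists_pow_succ_sub_pow_mul_deriv_eq {φ φ' φ'' : 𝕜 → 𝕜} {k : ℕ} {c c₁ : 𝕜}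
    (hs : IsOpen s) (hs' : IsPreconnected s) (hφ : ∀ t ∈ s, HasDerivAt φ (φ' t) t)
    (hφ' : ∀ t ∈ s, HasDerivAt φ' (φ'' t) t) (hφ0 : ∀ t ∈ s, φ t ≠ 0) (hφ'0 : ∀ t ∈ s, φ' t ≠ 0)
    (h : ∀ t ∈ s, φ t ^ k * (k + 1 - k * (φ' t / φ t) - φ'' t / φ' t)
      = c / (k + 1) * φ t ^ (k + 1) + c₁) :
    ∃ c₂, ∀ t ∈ s, φ t ^ (k + 1) - φ t ^ k * φ' t
      = c / ((k + 1) * (k + 1 + 1)) * φ t ^ (k + 2) + c₁ * φ t + c₂ := by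
  refine exists_eq_add_const_of_hasDerivAt hs hs'
    (f' := fun t ↦ (c / (k + 1) * φ t ^ (k + 1) + c₁) * φ' t) (fun t ht ↦ ?_) fun t ht ↦ ?_
  · rw [← h t ht]
    exact hasDerivAt_pow_succ_sub_pow_mul_deriv (hφ t ht) (hφ' t ht) (hφ0 t ht) (hφ'0 t ht) k
  · have hpow := hasDerivAt_const_div_mul_pow_succ (hφ t ht) (c / (k + 1)) (k + 1)
    rw [Nat.cast_add_one, div_div] at hpow
    exact (hpow.fun_add ((hφ t ht).const_mul c₁)).congr_deriv (by ring)

end Integration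

section LogDet

variable {s : Set ℝ} {φ ψ v : ℝ → ℝ} {a b : ℝ}

theorem contDiffOn_of_eqOn_sub_log_sub_log {n : WithTop ℕ∞} (hφ : ContDiffOn ℝ n φ s)
    (hψ : ContDiffOn ℝ n ψ s) (hφ0 : ∀ t ∈ s, φ t ≠ 0) (hψ0 : ∀ t ∈ s, ψ t ≠ 0)
    (hv : ∀ t ∈ s, v t = a * t - b * Real.log (φ t) - Real.log (ψ t)) : ContDiffOn ℝ n v s :=
  (((contDiffOn_const.mul contDiffOn_id).sub (contDiffOn_const.mul (hφ.log hφ0))).sub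
    (hψ.log hψ0)).congr hv

theorem deriv_eq_of_eqOn_sub_log_sub_log {t φ' ψ' : ℝ} (hs : IsOpen s) (ht : t ∈ s)
    (hφ : HasDerivAt φ φ' t) (hψ : HasDerivAt ψ ψ' t) (hφ0 : φ t ≠ 0) (hψ0 : ψ t ≠ 0)
    (hv : ∀ x ∈ s, v x = a * x - b * Real.log (φ x) - Real.log (ψ x)) :
    deriv v t = a - b * (φ' / φ t) - ψ' / ψ t := by
  have h := (((hasDerivAt_id t).const_mul a).sub ((hφ.log hφ0).const_mul b)).sub (hψ.log hψ0)
  rw [mul_one] at h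
  exact (h.congr_of_eventuallyEq (Filter.eventuallyEq_of_mem (hs.mem_nhds ht) hv)).deriv

end LogDet

theorem stmt_0_general {n : ℕ} (hn : n ≠ 0) {c : ℝ} {u v : ℝ → ℝ} {s : Set ℝ}
    (hs : IsOpen s) (hs' : IsPreconnected s) (hu : ContDiffOn ℝ 4 u s)
    (hu' : ∀ t ∈ s, 0 < deriv u t) (hu'' : ∀ t ∈ s, 0 < deriv (deriv u) t)
    (hv : ∀ t ∈ s, v t = (n : ℝ) * t - ((n : ℝ) - 1) * Real.log (deriv u t)
      - Real.log (deriv (deriv u) t))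
    (hscal : ∀ t ∈ s, ((n : ℝ) - 1) * deriv v t / deriv u t
      + deriv (deriv v) t / deriv (deriv u) t = c) :
    ∃ c₁ c₂ : ℝ, ∀ t ∈ s,
      (deriv u t) ^ n - (deriv u t) ^ (n - 1) * deriv (deriv u) t
        = (c / ((n : ℝ) * ((n : ℝ) + 1))) * (deriv u t) ^ (n + 1)
          + c₁ * deriv u t + c₂ := by
  obtain ⟨k, rfl⟩ := Nat.exists_eq_add_one_of_ne_zero hn
  simp only [Nat.cast_add_one, add_sub_cancel_right, Nat.add_sub_cancel] at hv hscal ⊢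
  have hφ0 t (ht : t ∈ s) := (hu' t ht).ne'
  have hφ'0 t (ht : t ∈ s) := (hu'' t ht).ne'
  have hφC : ContDiffOn ℝ 3 (deriv u) s := hu.deriv_of_isOpen hs (by norm_num)
  have hφ'C : ContDiffOn ℝ 2 (deriv (deriv u)) s := hφC.deriv_of_isOpen hs (by norm_num)
  have hvC : ContDiffOn ℝ 2 v s := contDiffOn_of_eqOn_sub_log_sub_log
    (hφC.of_le (by norm_num)) hφ'C hφ0 hφ'0 hv
  have hφ t (ht : t ∈ s) := hasDerivAt_deriv_of_contDiffOn (hu.of_le (by norm_num)) hs ht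
  have hφ' t (ht : t ∈ s) := hasDerivAt_deriv_of_contDiffOn (hφC.of_le (by norm_num)) hs ht
  have hv' t (ht : t ∈ s) := deriv_eq_of_eqOn_sub_log_sub_log hs ht (hφ t ht) (hφ' t ht)
    (hφ0 t ht) (hφ'0 t ht) hv
  obtain ⟨c₁, hc₁⟩ := exists_pow_mul_eq_of_mul_div_add_div_eq hs hs' hφ
    (fun t ht ↦ hasDerivAt_deriv_of_contDiffOn hvC hs ht) hφ0 hφ'0 hscal
  exact ⟨c₁, exists_pow_succ_sub_pow_mul_deriv_eq hs hs' hφ hφ' hφ0 hφ'0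
    fun t ht ↦ hv' t ht ▸ hc₁ t ht⟩

/-- Reduction of the constant scalar curvature equation for a rotationally
symmetric Kähler potential `u(t)` on `ℂⁿ \ {0}` to a first-order ODE:
if `(n-1)·v'/u' + v''/u'' = c` where `v = n·t - (n-1)·log u' - log u''`,
then `u'^n - u'^(n-1)·u'' = (c/(n(n+1)))·u'^(n+1) + c₁·u' + c₂`. -/
theorem stmt_0 (n : ℕ) (hn : 2 ≤ n) (c : ℝ) (u v : ℝ → ℝ)
    (hu : ContDiff ℝ (⊤ : ℕ∞) u)
    (hu' : ∀ t : ℝ, 0 < deriv u t)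
    (hu'' : ∀ t : ℝ, 0 < deriv (deriv u) t)
    (hv : ∀ t : ℝ, v t = (n : ℝ) * t - ((n : ℝ) - 1) * Real.log (deriv u t)
      - Real.log (deriv (deriv u) t))
    (hscal : ∀ t : ℝ, ((n : ℝ) - 1) * deriv v t / deriv u t
      + deriv (deriv v) t / deriv (deriv u) t = c) :
    ∃ c₁ c₂ : ℝ, ∀ t : ℝ,
      (deriv u t) ^ n - (deriv u t) ^ (n - 1) * deriv (deriv u) t
        = (c / ((n : ℝ) * ((n : ℝ) + 1))) * (deriv u t) ^ (n + 1)
          + c₁ * deriv u t + c₂ := by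
  simpa using stmt_0_general (by omega) isOpen_univ isPreconnected_univ
    (contDiff_infty.1 hu 4).contDiffOn (fun t _ ↦ hu' t) (fun t _ ↦ hu'' t)
    (fun t _ ↦ hv t) (fun t _ ↦ hscal t)
end

section
/- If c ≤ 0, then F(x) > 0 for every real x > a. -/
/-!
Both `F` and the sum of the Taylor remainders `xᵐ - (aᵐ + m·a^(m-1)·(x - a))` for `m = n` and
`m = n + 1`, weighted by `1` and `-c/(n(n+1))`, vanish to second order at `a` and have the same
second derivative, so they agree. For `c ≤ 0` the weights are nonnegative, and the remainders are
positive for `-a ≤ x`, `x ≠ a` by the strict form of Bernoulli's inequality.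
-/

lemma pow_add_mul_lt_add_pow {R : Type*} [CommSemiring R] [LinearOrder R] [IsStrictOrderedRing R]
    [ExistsAddOfLE R] {a b : R} {n : ℕ} (ha : 0 < a) (hb : b ≠ 0) (hab : 0 ≤ 2 * a + b)
    (hn : 2 ≤ n) : a ^ n + n * a ^ (n - 1) * b < (a + b) ^ n := by
  obtain ⟨k, rfl⟩ := Nat.exists_eq_add_of_le' hn
  have bernoulli : a ^ k + k * a ^ (k - 1) * b ≤ (a + b) ^ k := pow_add_mul_le_add_pow ha.le hab k
  have b_sq_pos : 0 < b ^ 2 := sq_pos_of_ne_zero hb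
  have remainder_pos : 0 < a ^ k * b ^ 2 + k * a ^ (k - 1) * (2 * a + b) * b ^ 2 := by positivity
  calc a ^ (k + 2) + (k + 2 : ℕ) * a ^ (k + 1) * b
      < a ^ (k + 2) + (k + 2 : ℕ) * a ^ (k + 1) * b
          + (a ^ k * b ^ 2 + k * a ^ (k - 1) * (2 * a + b) * b ^ 2) :=
        lt_add_of_pos_right _ remainder_pos
    _ = (a ^ k + k * a ^ (k - 1) * b) * (a + b) ^ 2 := by
        cases k <;> push_cast [add_tsub_cancel_right] <;> ring
    _ ≤ (a + b) ^ k * (a + b) ^ 2 := mul_le_mul_of_nonneg_right bernoulli (sq_nonneg _)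
    _ = (a + b) ^ (k + 2) := (pow_add _ _ _).symm

/-- The first-order Taylor remainder at `a` of `x ↦ x ^ n`, that is, the height of the graph above
its tangent line at `a`. For `n = 0` the truncated exponent `n - 1` is harmless, its coefficient
being `0`. -/
def powTangentGap {R : Type*} [CommRing R] (n : ℕ) (a x : R) : R :=
  x ^ n - (a ^ n + n * a ^ (n - 1) * (x - a))

lemma powTangentGap_pos {R : Type*} [CommRing R] [LinearOrder R] [IsStrictOrderedRing R] {a x : R}
    {n : ℕ} (ha : 0 < a) (hax : -a ≤ x) (hxa : x ≠ a) (hn : 2 ≤ n) :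
    0 < powTangentGap n a x := by
  have h := pow_add_mul_lt_add_pow ha (sub_ne_zero.2 hxa) (by linarith) hn
  rw [add_sub_cancel] at h
  exact sub_pos.2 h

section Field

variable {K : Type*} [Field K]

lemma powTangentGap_sub_mul_powTangentGap_succ [CharZero K] {n : ℕ} (hn : n ≠ 0) (a c x : K) :
    powTangentGap n a x - c / (n * (n + 1)) * powTangentGap (n + 1) a x =
      -(c / (n * (n + 1))) * x ^ (n + 1) + x ^ n - (n * a ^ (n - 1) - c / n * a ^ n) * x
        - ((1 - n) * a ^ n + c / (n + 1) * a ^ (n + 1)) := by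
  obtain ⟨m, rfl⟩ := Nat.exists_eq_succ_of_ne_zero hn
  have hm : (m : K) + 1 ≠ 0 := by exact_mod_cast m.succ_ne_zero
  have hm' : (m : K) + 1 + 1 ≠ 0 := by exact_mod_cast (m + 1).succ_ne_zero
  simp only [powTangentGap, Nat.succ_eq_add_one, add_tsub_cancel_right, Nat.cast_add, Nat.cast_one]
  field_simp
  ring

theorem stmt_1_general [LinearOrder K] [IsStrictOrderedRing K] (n : ℕ) (hn : 2 ≤ n) (a c : K)
    (ha : 0 < a) (hc : c ≤ 0) (c₁ c₂ : K)
    (hc₁ : c₁ = (n : K) * a ^ (n - 1) - (c / n) * a ^ n)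
    (hc₂ : c₂ = (1 - (n : K)) * a ^ n + (c / ((n : K) + 1)) * a ^ (n + 1))
    (F : K → K)
    (hF : ∀ x : K, F x = -(c / ((n : K) * ((n : K) + 1))) * x ^ (n + 1)
      + x ^ n - c₁ * x - c₂) :
    ∀ x : K, -a ≤ x → x ≠ a → 0 < F x := by
  intro x hax hxa
  have coeff_nonpos : c / ((n : K) * (n + 1)) ≤ 0 :=
    div_nonpos_of_nonpos_of_nonneg hc (by positivity)
  have gap_pos : 0 < powTangentGap n a x := powTangentGap_pos ha hax hxa hn
  have gap_succ_pos : 0 < powTangentGap (n + 1) a x := powTangentGap_pos ha hax hxa (by lia)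
  rw [hF, hc₁, hc₂, ← powTangentGap_sub_mul_powTangentGap_succ (by lia)]
  exact sub_pos.2 ((mul_nonpos_of_nonpos_of_nonneg coeff_nonpos gap_succ_pos.le).trans_lt gap_pos)

end Field

/-- If `c ≤ 0` then `F(x) > 0` for every `x > a`, where
`F(x) = -(c/(n(n+1)))·x^(n+1) + xⁿ - c₁·x - c₂` with
`c₁ = n·a^(n-1) - (c/n)·aⁿ` and `c₂ = (1-n)·aⁿ + (c/(n+1))·a^(n+1)`. -/
theorem stmt_1 (n : ℕ) (hn : 2 ≤ n) (a c : ℝ) (ha : 0 < a) (hc : c ≤ 0)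
    (c₁ c₂ : ℝ)
    (hc₁ : c₁ = (n : ℝ) * a ^ (n - 1) - (c / n) * a ^ n)
    (hc₂ : c₂ = (1 - (n : ℝ)) * a ^ n + (c / ((n : ℝ) + 1)) * a ^ (n + 1))
    (F : ℝ → ℝ)
    (hF : ∀ x : ℝ, F x = -(c / ((n : ℝ) * ((n : ℝ) + 1))) * x ^ (n + 1)
      + x ^ n - c₁ * x - c₂) :
    ∀ x : ℝ, a < x → 0 < F x :=
  fun x hx => stmt_1_general n hn a c ha hc c₁ c₂ hc₁ hc₂ F hF x (by linarith) hx.ne'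
end

section
/- If c > 0 and a·c < n(n−1), then F(x) > 0 for every real x with a < x ≤ n(n−1)/c. -/
/-!
The polynomial `F` is `p(x) = xⁿ - c / (n (n + 1)) xⁿ⁺¹` minus the tangent line of `p` at `a`.
Since `p''(x) = xⁿ⁻² (n (n - 1) - c x)`, the function `p` is strictly convex on the part of
`[0, ∞)` where `c x ≤ n (n - 1)`, so there it lies strictly above that tangent line away from `a`.
-/

open Set

lemma tangentLine_lt_of_strictConvexOn {S : Set ℝ} {f : ℝ → ℝ} {f' x y : ℝ}
    (hf : StrictConvexOn ℝ S f) (hx : x ∈ S) (hy : y ∈ S) (hyx : y ≠ x)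
    (hf' : HasDerivWithinAt f f' S x) : f x + f' * (y - x) < f y := by
  rcases hyx.lt_or_gt with hlt | hgt
  · have hslope := hf.slope_lt_of_hasDerivWithinAt hy hx hlt hf'
    rw [slope_def_field, div_lt_iff₀ (sub_pos.2 hlt)] at hslope
    linarith
  · have hslope := hf.lt_slope_of_hasDerivWithinAt hx hy hgt hf'
    rw [slope_def_field, lt_div_iff₀ (sub_pos.2 hgt)] at hslope
    linarith

/-- The part `xⁿ - c / (n (n + 1)) xⁿ⁺¹` of the polynomial `F` left after dropping its affine
terms. -/
noncomputable def nonlinearPart (n : ℕ) (c x : ℝ) : ℝ :=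
  x ^ n - c / (n * (n + 1)) * x ^ (n + 1)

section nonlinearPart

variable {n : ℕ} {a b c : ℝ}

lemma hasDerivAt_nonlinearPart (x : ℝ) :
    HasDerivAt (nonlinearPart n c) (n * x ^ (n - 1) - c / n * x ^ n) x := by
  refine ((hasDerivAt_pow n x).sub
    ((hasDerivAt_pow (n + 1) x).const_mul (c / (n * (n + 1))))).congr_deriv ?_
  rw [Nat.add_sub_cancel]
  push_cast
  field_simp

lemma deriv_deriv_nonlinearPart (hn : 2 ≤ n) (x : ℝ) :
    deriv (deriv (nonlinearPart n c)) x = x ^ (n - 2) * (n * (n - 1) - c * x) := by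
  have hderiv : deriv (nonlinearPart n c) = fun y ↦ n * y ^ (n - 1) - c / n * y ^ n :=
    funext fun y ↦ (hasDerivAt_nonlinearPart y).deriv
  rw [hderiv]
  refine ((((hasDerivAt_pow (n - 1) x).const_mul (n : ℝ)).sub
    ((hasDerivAt_pow n x).const_mul (c / n))).congr_deriv ?_).deriv
  obtain ⟨m, rfl⟩ := Nat.exists_eq_add_of_le' hn
  simp only [Nat.add_sub_cancel, show m + 2 - 1 = m + 1 from rfl]
  push_cast
  field_simp
  ring

lemma strictConvexOn_nonlinearPart (hn : 2 ≤ n) (hb : b * c ≤ n * (n - 1)) :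
    StrictConvexOn ℝ (Icc 0 b) (nonlinearPart n c) := by
  refine strictConvexOn_of_deriv2_pos (convex_Icc 0 b)
    (fun x _ ↦ (hasDerivAt_nonlinearPart x).continuousAt.continuousWithinAt) fun x hx ↦ ?_
  rw [interior_Icc] at hx
  have hn' : (2 : ℝ) ≤ n := by exact_mod_cast hn
  have hcx : c * x < n * (n - 1) := by
    rcases le_or_gt c 0 with hc | hc
    · calc c * x ≤ 0 := mul_nonpos_of_nonpos_of_nonneg hc hx.1.le
        _ < n * (n - 1) := by nlinarith
    · calc c * x < c * b := mul_lt_mul_of_pos_left hx.2 hc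
        _ ≤ n * (n - 1) := by rwa [mul_comm]
  change 0 < deriv (deriv (nonlinearPart n c)) x
  rw [deriv_deriv_nonlinearPart hn]
  exact mul_pos (pow_pos hx.1 _) (sub_pos.2 hcx)

lemma tangentLine_nonlinearPart (hn : n ≠ 0) (x : ℝ) :
    nonlinearPart n c a + (n * a ^ (n - 1) - c / n * a ^ n) * (x - a) =
      (n * a ^ (n - 1) - c / n * a ^ n) * x +
        ((1 - n) * a ^ n + c / (n + 1) * a ^ (n + 1)) := by
  obtain ⟨m, rfl⟩ := Nat.exists_eq_succ_of_ne_zero hn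
  simp only [nonlinearPart, Nat.succ_eq_add_one, Nat.add_sub_cancel]
  push_cast
  field_simp
  ring

end nonlinearPart

theorem stmt_2_general (n : ℕ) (hn : 2 ≤ n) (a c : ℝ) (ha : 0 ≤ a)
    (hac : a * c ≤ (n : ℝ) * ((n : ℝ) - 1))
    (c₁ c₂ : ℝ)
    (hc₁ : c₁ = (n : ℝ) * a ^ (n - 1) - (c / n) * a ^ n)
    (hc₂ : c₂ = (1 - (n : ℝ)) * a ^ n + (c / ((n : ℝ) + 1)) * a ^ (n + 1))
    (F : ℝ → ℝ)
    (hF : ∀ x : ℝ, F x = -(c / ((n : ℝ) * ((n : ℝ) + 1))) * x ^ (n + 1)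
      + x ^ n - c₁ * x - c₂) :
    ∀ x : ℝ, 0 ≤ x → x * c ≤ (n : ℝ) * ((n : ℝ) - 1) → x ≠ a → 0 < F x := by
  intro x hx hxc hxa
  have hmax : max a x * c ≤ n * (n - 1) := by
    rcases max_choice a x with h | h <;> rwa [h]
  have hlt := tangentLine_lt_of_strictConvexOn (strictConvexOn_nonlinearPart hn hmax)
    ⟨ha, le_max_left a x⟩ ⟨hx, le_max_right a x⟩ hxa
    (hasDerivAt_nonlinearPart a).hasDerivWithinAt
  rw [tangentLine_nonlinearPart (by lia), ← hc₁, ← hc₂, nonlinearPart] at hlt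
  rw [hF]
  linarith

/-- If `c > 0` and `a·c < n(n-1)`, then `F(x) > 0` for every
`x` with `a < x ≤ n(n-1)/c`. -/
theorem stmt_2 (n : ℕ) (hn : 2 ≤ n) (a c : ℝ) (ha : 0 < a) (hc : 0 < c)
    (hac : a * c < (n : ℝ) * ((n : ℝ) - 1))
    (c₁ c₂ : ℝ)
    (hc₁ : c₁ = (n : ℝ) * a ^ (n - 1) - (c / n) * a ^ n)
    (hc₂ : c₂ = (1 - (n : ℝ)) * a ^ n + (c / ((n : ℝ) + 1)) * a ^ (n + 1))
    (F : ℝ → ℝ)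
    (hF : ∀ x : ℝ, F x = -(c / ((n : ℝ) * ((n : ℝ) + 1))) * x ^ (n + 1)
      + x ^ n - c₁ * x - c₂) :
    ∀ x : ℝ, a < x → x ≤ (n : ℝ) * ((n : ℝ) - 1) / c → 0 < F x :=
  fun x hax hxb ↦ stmt_2_general n hn a c ha.le hac.le c₁ c₂ hc₁ hc₂ F hF x
    (ha.trans hax).le ((le_div_iff₀ hc).1 hxb) hax.ne'
end

section
/- Let a > 0 and s > a be real numbers, and let G : [a, s] → ℝ be a twice continuously differentiable function with G(a) = 0, G'(a) = 0, and G(x) > 0 for all x ∈ (a, s]. Then the function x ↦ 1/√(G(x)) is not integrable on the interval (a, s] (equivalently, the improper integral ∫ₐ^s 1/√(G(x)) dx diverges to +∞). -/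
open MeasureTheory

/-!
At a double zero `a`, Taylor's formula gives `G x = O((x - a)²)`, hence `1/√(G x)` dominates a
positive multiple of `1/(x - a)`, which has a logarithmically divergent integral at `a`.
-/

open Asymptotics Filter Set
open scoped Nat Topology

section Taylor

variable {E : Type*} [NormedAddCommGroup E] [NormedSpace ℝ E] {f : ℝ → E} {x₀ : ℝ} {s : Set ℝ}

theorem isBigO_sub_pow_of_iteratedDerivWithin_eq_zero {n : ℕ} (hs : Convex ℝ s) (hx₀ : x₀ ∈ s)
    (hf : ContDiffOn ℝ n f s) (hzero : ∀ k < n, iteratedDerivWithin k f s x₀ = 0) :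
    f =O[𝓝[s] x₀] fun x => (x - x₀) ^ n := by
  have htaylor (x : ℝ) : taylorWithinEval f n s x₀ x =
      ((n ! : ℝ)⁻¹ * (x - x₀) ^ n) • iteratedDerivWithin n f s x₀ := by
    rw [taylor_within_apply, Finset.sum_range_succ, Finset.sum_eq_zero, zero_add]
    intro k hk
    rw [hzero k (Finset.mem_range.1 hk), smul_zero]
  have hleading : (fun x => taylorWithinEval f n s x₀ x) =O[𝓝[s] x₀] fun x => (x - x₀) ^ n := by
    refine .of_bound (‖(n ! : ℝ)⁻¹‖ * ‖iteratedDerivWithin n f s x₀‖) (.of_forall fun x => ?_)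
    rw [htaylor, norm_smul, norm_mul, mul_right_comm]
  simpa only [sub_add_cancel] using (taylor_isLittleO hs hx₀ hf).isBigO.add hleading

theorem isBigO_sub_sq_of_derivWithin_eq_zero (hs : Convex ℝ s) (hx₀ : x₀ ∈ s)
    (hf : ContDiffOn ℝ 2 f s) (hzero : f x₀ = 0) (hderiv : derivWithin f s x₀ = 0) :
    f =O[𝓝[s] x₀] fun x => (x - x₀) ^ 2 := by
  refine isBigO_sub_pow_of_iteratedDerivWithin_eq_zero hs hx₀ hf fun k hk => ?_
  interval_cases k
  · rwa [iteratedDerivWithin_zero]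
  · rwa [iteratedDerivWithin_one]

end Taylor

theorem inv_isBigO_one_div_sqrt {α : Type*} {l : Filter α} {f g : α → ℝ}
    (hfg : f =O[l] fun x => g x ^ 2) (hf : ∀ᶠ x in l, 0 < f x) :
    (fun x => (g x)⁻¹) =O[l] fun x => 1 / √(f x) := by
  have hsqrt : (fun x => √(f x)) =O[l] g := by
    simpa only [Real.sqrt_sq_eq_abs, isBigO_abs_right] using
      hfg.sqrt (.of_forall fun x => sq_nonneg (g x))
  simp only [one_div]
  exact hsqrt.inv_rev (hf.mono fun x hx h => absurd h (Real.sqrt_pos.2 hx).ne')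

theorem not_integrableAtFilter_nhdsGT_sub_inv (a : ℝ) :
    ¬ IntegrableAtFilter (fun x => (x - a)⁻¹) (𝓝[>] a) := by
  rintro ⟨k, hk, hint⟩
  obtain ⟨b, hab : a < b, hbk⟩ := mem_nhdsGT_iff_exists_Ioc_subset.1 hk
  have hinterval : IntervalIntegrable (fun x => (x - a)⁻¹) volume a b :=
    (intervalIntegrable_iff_integrableOn_Ioc_of_le hab.le).2 (hint.mono_set hbk)
  exact (intervalIntegrable_sub_inv_iff.1 hinterval).elim hab.ne (· left_mem_uIcc)

theorem not_integrableAtFilter_nhdsGT_of_sub_inv_isBigO {F : Type*} [NormedAddCommGroup F]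
    {f : ℝ → F} {a : ℝ} (hf : (fun x => (x - a)⁻¹) =O[𝓝[>] a] f) :
    ¬ IntegrableAtFilter f (𝓝[>] a) := by
  have hmeas : StronglyMeasurable fun x : ℝ => (x - a)⁻¹ :=
    Measurable.stronglyMeasurable (by fun_prop)
  exact fun hint => not_integrableAtFilter_nhdsGT_sub_inv a
    (hf.integrableAtFilter hmeas.stronglyMeasurableAtFilter hint)

theorem stmt_3_general {a : ℝ} {G : ℝ → ℝ} (hG : G =O[𝓝[>] a] fun x => (x - a) ^ 2)
    (hGpos : ∀ᶠ x in 𝓝[>] a, 0 < G x) :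
    ¬ IntegrableAtFilter (fun x => 1 / √(G x)) (𝓝[>] a) :=
  not_integrableAtFilter_nhdsGT_of_sub_inv_isBigO (inv_isBigO_one_div_sqrt hG hGpos)

/-- If `G` is `C²` on `[a, s]` with a double zero at `a` and `G > 0` on `(a, s]`,
then `x ↦ 1/√(G x)` is not integrable on `(a, s]`. -/
theorem stmt_3 (a s : ℝ) (ha : 0 < a) (has : a < s) (G : ℝ → ℝ)
    (hG : ContDiffOn ℝ 2 G (Set.Icc a s))
    (hGa : G a = 0)
    (hG'a : derivWithin G (Set.Icc a s) a = 0)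
    (hGpos : ∀ x ∈ Set.Ioc a s, 0 < G x) :
    ¬ IntegrableOn (fun x => 1 / Real.sqrt (G x)) (Set.Ioc a s) := by
  have hsq : G =O[𝓝[Icc a s] a] fun x => (x - a) ^ 2 :=
    isBigO_sub_sq_of_derivWithin_eq_zero (convex_Icc a s) (left_mem_Icc.2 has.le) hG hGa hG'a
  exact fun hint => stmt_3_general (hsq.mono (nhdsWithin_le_of_mem (Icc_mem_nhdsGT has)))
    (eventually_of_mem (Ioc_mem_nhdsGT has) hGpos) ⟨_, Ioc_mem_nhdsGT has, hint⟩
end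

section
/- If c < 0, then lim_{y → ∞} y · ∫_y^∞ x^(n−1)/F(x) dx = n(n+1)/(−c). -/
open MeasureTheory Filter

open Asymptotics Topology

/-!
Tail integration preserves `o` at infinity. If `x ^ (p + 1) • g x → L`, then `g` differs from
`x ^ (-p - 1) • L` by `o(x ^ (-p - 1))`, and the tail integral of `x ^ (-p - 1)` over `[y, ∞)` is
`y ^ (-p) / p`; hence `y ^ p • ∫_y^∞ g → p⁻¹ • L`. For a rational function `P / Q` with
`deg Q = deg P + d + 1` this applies with `p = d` and `L` the ratio of the leading coefficients.
-/

theorem isLittleO_setIntegral_Ici {α E F : Type*} [Preorder α] [TopologicalSpace α]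
    [ClosedIciTopology α] [MeasurableSpace α] [OpensMeasurableSpace α] {μ : Measure α}
    [NormedAddCommGroup E] [NormedSpace ℝ E] [NormedAddCommGroup F] {f : α → E} {g : α → F}
    (hfg : f =o[atTop] g) (hg : IntegrableAtFilter g atTop μ) :
    (fun y ↦ ∫ x in Set.Ici y, f x ∂μ) =o[atTop] fun y ↦ ∫ x in Set.Ici y, ‖g x‖ ∂μ := by
  obtain ⟨s, hs, hgs⟩ := hg
  refine isLittleO_iff.2 fun ε hε ↦ ?_
  filter_upwards [eventually_forall_ge_atTop.2 (isLittleO_iff.1 hfg hε),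
    eventually_forall_ge_atTop.2 hs] with y hbound hys
  have hg_int : IntegrableOn (fun x ↦ ε * ‖g x‖) (Set.Ici y) μ :=
    (hgs.mono_set hys).norm.const_mul ε
  calc ‖∫ x in Set.Ici y, f x ∂μ‖
      ≤ ∫ x in Set.Ici y, ε * ‖g x‖ ∂μ :=
        norm_integral_le_of_norm_le hg_int
          ((ae_restrict_mem measurableSet_Ici).mono hbound)
    _ = ε * ∫ x in Set.Ici y, ‖g x‖ ∂μ := integral_const_mul ε _
    _ ≤ ε * ‖∫ x in Set.Ici y, ‖g x‖ ∂μ‖ := by gcongr; exact Real.le_norm_self _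

theorem integrableOn_Ici_rpow_neg_sub_one {p y : ℝ} (hp : 0 < p) (hy : 0 < y) :
    IntegrableOn (fun x : ℝ ↦ x ^ (-p - 1)) (Set.Ici y) :=
  (integrableOn_Ici_iff_integrableOn_Ioi).2 (integrableOn_Ioi_rpow_of_lt (by linarith) hy)

theorem rpow_mul_integral_Ici_rpow_neg_sub_one {p y : ℝ} (hp : 0 < p) (hy : 0 < y) :
    y ^ p * ∫ x in Set.Ici y, x ^ (-p - 1) = p⁻¹ := by
  rw [integral_Ici_eq_integral_Ioi, integral_Ioi_rpow_of_lt (by linarith) hy, sub_add_cancel,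
    neg_div_neg_eq, ← mul_div_assoc, ← Real.rpow_add hy, add_neg_cancel, Real.rpow_zero, one_div]

section TailIntegral

variable {E : Type*} [NormedAddCommGroup E] [NormedSpace ℝ E] {g : ℝ → E} {L : E} {p : ℝ}

theorem isLittleO_sub_rpow_smul_of_tendsto_rpow_smul
    (h : Tendsto (fun x : ℝ ↦ x ^ (p + 1) • g x) atTop (𝓝 L)) :
    (fun x ↦ g x - x ^ (-p - 1) • L) =o[atTop] fun x ↦ x ^ (-p - 1) := by
  have h_one : (fun x : ℝ ↦ x ^ (p + 1) • g x - L) =o[atTop] fun _ ↦ (1 : ℝ) :=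
    (isLittleO_one_iff ℝ).2 (tendsto_sub_nhds_zero_iff.2 h)
  refine ((isBigO_refl (fun x : ℝ ↦ x ^ (-p - 1)) atTop).smul_isLittleO h_one).congr' ?_ ?_
  · filter_upwards [eventually_gt_atTop 0] with x hx
    rw [smul_sub, smul_smul, ← Real.rpow_add hx, show -p - 1 + (p + 1) = 0 by ring,
      Real.rpow_zero, one_smul]
  · simp only [smul_eq_mul, mul_one, EventuallyEq.rfl]

theorem integrableAtFilter_atTop_of_tendsto_rpow_smul (hp : 0 < p)
    (hg : StronglyMeasurableAtFilter g atTop)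
    (h : Tendsto (fun x : ℝ ↦ x ^ (p + 1) • g x) atTop (𝓝 L)) :
    IntegrableAtFilter g atTop := by
  have h_pow : IntegrableAtFilter (fun x : ℝ ↦ x ^ (-p - 1)) atTop :=
    ⟨Set.Ici 1, Ici_mem_atTop 1, integrableOn_Ici_rpow_neg_sub_one hp one_pos⟩
  have h_lead : (fun x : ℝ ↦ x ^ (-p - 1) • L) =O[atTop] fun x ↦ x ^ (-p - 1) :=
    .of_bound ‖L‖ (.of_forall fun x ↦ by rw [norm_smul, mul_comm])
  have h_bigO : g =O[atTop] fun x ↦ x ^ (-p - 1) := by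
    simpa only [sub_add_cancel] using
      (isLittleO_sub_rpow_smul_of_tendsto_rpow_smul h).isBigO.add h_lead
  exact h_bigO.integrableAtFilter hg h_pow

theorem tendsto_rpow_smul_integral_Ici_sub (hp : 0 < p)
    (h : Tendsto (fun x : ℝ ↦ x ^ (p + 1) • g x) atTop (𝓝 L)) :
    Tendsto (fun y : ℝ ↦ y ^ p • ∫ x in Set.Ici y, (g x - x ^ (-p - 1) • L)) atTop (𝓝 0) := by
  have h_tail := isLittleO_setIntegral_Ici (isLittleO_sub_rpow_smul_of_tendsto_rpow_smul h)
    ⟨Set.Ici 1, Ici_mem_atTop 1, integrableOn_Ici_rpow_neg_sub_one hp one_pos⟩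
  refine (isLittleO_const_iff (inv_ne_zero hp.ne')).1
    (((isBigO_refl (fun y : ℝ ↦ y ^ p) atTop).smul_isLittleO h_tail).congr' .rfl ?_)
  filter_upwards [eventually_gt_atTop 0] with y hy
  have h_norm : ∫ x in Set.Ici y, ‖x ^ (-p - 1)‖ = ∫ x in Set.Ici y, x ^ (-p - 1) :=
    setIntegral_congr_fun measurableSet_Ici fun x hx ↦
      Real.norm_of_nonneg (Real.rpow_nonneg (hy.le.trans hx) _)
  rw [h_norm, smul_eq_mul, rpow_mul_integral_Ici_rpow_neg_sub_one hp hy]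

theorem tendsto_rpow_smul_integral_Ici [CompleteSpace E] (hp : 0 < p)
    (hg : StronglyMeasurableAtFilter g atTop)
    (h : Tendsto (fun x : ℝ ↦ x ^ (p + 1) • g x) atTop (𝓝 L)) :
    Tendsto (fun y : ℝ ↦ y ^ p • ∫ x in Set.Ici y, g x) atTop (𝓝 (p⁻¹ • L)) := by
  obtain ⟨s, hs, hgs⟩ := integrableAtFilter_atTop_of_tendsto_rpow_smul hp hg h
  rw [← zero_add (p⁻¹ • L)]
  refine ((tendsto_rpow_smul_integral_Ici_sub hp h).add_const (p⁻¹ • L)).congr' ?_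
  filter_upwards [eventually_gt_atTop 0, eventually_forall_ge_atTop.2 hs] with y hy hys
  have hg_int : IntegrableOn g (Set.Ici y) := hgs.mono_set hys
  rw [integral_sub hg_int ((integrableOn_Ici_rpow_neg_sub_one hp hy).smul_const L),
    integral_smul_const, smul_sub, smul_smul, rpow_mul_integral_Ici_rpow_neg_sub_one hp hy,
    sub_add_cancel]

end TailIntegral

section RationalFunction

open Polynomial

theorem tendsto_pow_mul_integral_Ici_eval_div_eval {P Q : ℝ[X]} {d : ℕ} (hd : d ≠ 0)
    (hPQ : Q.degree = P.degree + (d + 1 : ℕ)) :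
    Tendsto (fun y ↦ y ^ d * ∫ x in Set.Ici y, P.eval x / Q.eval x) atTop
      (𝓝 (P.leadingCoeff / Q.leadingCoeff / d)) := by
  have h_lim : Tendsto (fun x : ℝ ↦ x ^ ((d : ℝ) + 1) • (P.eval x / Q.eval x)) atTop
      (𝓝 (P.leadingCoeff / Q.leadingCoeff)) := by
    have h_deg : (X ^ (d + 1) * P).degree = Q.degree := by
      rw [degree_mul, degree_X_pow, hPQ, add_comm]
    have h_ratio := div_tendsto_atTop_leadingCoeff_div_of_degree_eq _ _ h_deg
    simpa only [eval_mul, eval_pow, eval_X, mul_div_assoc, leadingCoeff_mul, leadingCoeff_X_pow,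
      one_mul, ← Nat.cast_succ, Real.rpow_natCast, smul_eq_mul] using h_ratio
  have h_measurable : Measurable fun x ↦ P.eval x / Q.eval x := by fun_prop
  have h_tail := tendsto_rpow_smul_integral_Ici (by positivity)
    h_measurable.aestronglyMeasurable.stronglyMeasurableAtFilter h_lim
  simpa only [Real.rpow_natCast, smul_eq_mul, inv_mul_eq_div] using h_tail

theorem stmt_8_general {n : ℕ} (hn : n ≠ 0) {c : ℝ} (hc : c ≠ 0) (c₁ c₂ : ℝ) {F : ℝ → ℝ}
    (hF : ∀ x, F x = -(c / ((n : ℝ) * ((n : ℝ) + 1))) * x ^ (n + 1) + x ^ n - c₁ * x - c₂) :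
    Tendsto (fun y : ℝ ↦ y * ∫ x in Set.Ici y, x ^ (n - 1) / F x)
      atTop (𝓝 ((n : ℝ) * ((n : ℝ) + 1) / (-c))) := by
  set A : ℝ := -(c / ((n : ℝ) * ((n : ℝ) + 1))) with hA
  have hA₀ : A ≠ 0 := neg_ne_zero.2 (div_ne_zero hc (by positivity))
  let R : ℝ[X] := X ^ n - C c₁ * X - C c₂
  let Q : ℝ[X] := C A * X ^ (n + 1) + R
  have h_deg_lt : R.degree < (C A * X ^ (n + 1)).degree := by
    rw [degree_C_mul_X_pow _ hA₀]
    have hR : R.degree ≤ n := by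
      unfold R
      compute_degree
      exact max_le le_rfl (mod_cast Nat.one_le_iff_ne_zero.2 hn)
    exact hR.trans_lt (mod_cast n.lt_succ_self)
  have h_deg : Q.degree = (X ^ (n - 1) : ℝ[X]).degree + (1 + 1 : ℕ) := by
    rw [degree_add_eq_left_of_degree_lt h_deg_lt, degree_C_mul_X_pow _ hA₀, degree_X_pow]
    norm_cast
    omega
  have h_lead : Q.leadingCoeff = A := by
    rw [leadingCoeff_add_of_degree_lt' h_deg_lt, leadingCoeff_C_mul_X_pow]
  have hQF : ∀ x, Q.eval x = F x := fun x ↦ by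
    simp only [Q, R, hF, eval_add, eval_sub, eval_mul, eval_pow, eval_C, eval_X]
    ring
  have h_value : (n : ℝ) * ((n : ℝ) + 1) / (-c) = 1 / A := by
    rw [hA, ← neg_div, one_div_div]
  simpa [hQF, h_lead, h_value] using tendsto_pow_mul_integral_Ici_eval_div_eval one_ne_zero h_deg

end RationalFunction

/-- If `c < 0`, then `y · ∫_y^∞ x^(n-1)/F(x) dx → n(n+1)/(-c)` as `y → ∞`. -/
theorem stmt_8 (n : ℕ) (hn : 2 ≤ n) (a c : ℝ) (ha : 0 < a) (hc : c < 0)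
    (c₁ c₂ : ℝ)
    (hc₁ : c₁ = (n : ℝ) * a ^ (n - 1) - (c / n) * a ^ n)
    (hc₂ : c₂ = (1 - (n : ℝ)) * a ^ n + (c / ((n : ℝ) + 1)) * a ^ (n + 1))
    (F : ℝ → ℝ)
    (hF : ∀ x : ℝ, F x = -(c / ((n : ℝ) * ((n : ℝ) + 1))) * x ^ (n + 1)
      + x ^ n - c₁ * x - c₂) :
    Tendsto (fun y : ℝ => y * ∫ x in Set.Ici y, x ^ (n - 1) / F x)
      atTop (nhds ((n : ℝ) * ((n : ℝ) + 1) / (-c))) :=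
  stmt_8_general (by omega) hc.ne c₁ c₂ hF
end

section
/- Suppose c > 0 and a·c < n(n−1). If b > a satisfies F(b) = 0 and F(x) > 0 for all x ∈ (a, b), then F'(b) < 0. -/
/-!
`F` is the difference between `g x = x ^ n - c / (n (n + 1)) * x ^ (n + 1)` and its tangent line at
`a`, so `F b = 0` says that this tangent meets the graph of `g` again at `b`, and the claim
`F' b < 0` becomes `g' b < g' a`. By the mean value theorem `g'` returns to the value `g' a` at some
`ξ ∈ (a, b)`, so `g''` vanishes at some `η ∈ (a, ξ)`. As `g'' x = (n (n - 1) - c x) x ^ (n - 2)` has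
only one positive root and is negative beyond it, `g'` strictly decreases on `[η, b]`, whence
`g' b < g' ξ = g' a`.
-/

open Set

theorem deriv_lt_of_tangent_meets_graph {g g' g'' : ℝ → ℝ} {a b : ℝ} (hab : a < b)
    (hgc : ContinuousOn g (Icc a b)) (hg : ∀ x ∈ Ioo a b, HasDerivAt g (g' x) x)
    (hgc' : ContinuousOn g' (Icc a b)) (hg' : ∀ x ∈ Ioo a b, HasDerivAt g' (g'' x) x)
    (hneg : ∀ x ∈ Ioo a b, g'' x = 0 → ∀ y ∈ Ioo x b, g'' y < 0)
    (htangent : g b = g a + g' a * (b - a)) : g' b < g' a := by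
  obtain ⟨ξ, ⟨haξ, hξb⟩, hξ⟩ := exists_hasDerivAt_eq_slope g g' hab hgc hg
  have hξ_eq : g' ξ = g' a := by
    rw [hξ, div_eq_iff (sub_pos.2 hab).ne', htangent, add_sub_cancel_left]
  obtain ⟨η, ⟨haη, hηξ⟩, hη⟩ := exists_hasDerivAt_eq_zero haξ
    (hgc'.mono (Icc_subset_Icc_right hξb.le)) hξ_eq.symm
    fun x hx ↦ hg' x (Ioo_subset_Ioo_right hξb.le hx)
  have hηb : η < b := hηξ.trans hξb
  have hanti : StrictAntiOn g' (Icc η b) := by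
    refine strictAntiOn_of_deriv_neg (convex_Icc η b)
      (hgc'.mono (Icc_subset_Icc_left haη.le)) fun x hx ↦ ?_
    rw [interior_Icc] at hx
    rw [(hg' x (Ioo_subset_Ioo_left haη.le hx)).deriv]
    exact hneg η ⟨haη, hηb⟩ hη x hx
  exact hξ_eq ▸ hanti ⟨hηξ.le, hξb.le⟩ (right_mem_Icc.2 hηb.le) hξb

theorem sub_mul_mul_pow_neg_of_root_lt {k c x y : ℝ} {m : ℕ} (hc : 0 < c) (hx : 0 < x)
    (hroot : (k - c * x) * x ^ m = 0) (hxy : x < y) : (k - c * y) * y ^ m < 0 := by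
  have hk : k - c * x = 0 := (mul_eq_zero.1 hroot).resolve_right (pow_pos hx m).ne'
  have hcxy : c * x < c * y := mul_lt_mul_of_pos_left hxy hc
  exact mul_neg_of_neg_of_pos (by linarith) (pow_pos (hx.trans hxy) m)

/-- The polynomial `F` of the theorem without its affine part `-c₁ x - c₂`: a power bent down by a
higher-order term. -/
noncomputable def bentPow (n : ℕ) (c x : ℝ) : ℝ :=
  x ^ n - c / (n * (n + 1)) * x ^ (n + 1)

/-- The derivative of `bentPow n c` for `n ≠ 0`; its value at `a` is the coefficient `c₁`. -/
noncomputable def bentPowDeriv (n : ℕ) (c x : ℝ) : ℝ :=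
  n * x ^ (n - 1) - c / n * x ^ n

section bentPow

variable {n : ℕ} {a b c : ℝ}

theorem hasDerivAt_bentPow (hn : n ≠ 0) (c x : ℝ) :
    HasDerivAt (bentPow n c) (bentPowDeriv n c x) x := by
  have hn' : (n : ℝ) ≠ 0 := Nat.cast_ne_zero.2 hn
  refine ((hasDerivAt_pow n x).sub
    ((hasDerivAt_pow (n + 1) x).const_mul (c / (n * (n + 1))))).congr_deriv ?_
  rw [bentPowDeriv, Nat.add_sub_cancel]
  push_cast
  field_simp

theorem hasDerivAt_bentPowDeriv (hn : 2 ≤ n) (c x : ℝ) :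
    HasDerivAt (bentPowDeriv n c) ((n * (n - 1) - c * x) * x ^ (n - 2)) x := by
  obtain ⟨m, rfl⟩ := Nat.exists_eq_add_of_le' hn
  refine (((hasDerivAt_pow (m + 2 - 1) x).const_mul ((m + 2 : ℕ) : ℝ)).sub
    ((hasDerivAt_pow (m + 2) x).const_mul (c / (m + 2 : ℕ)))).congr_deriv ?_
  simp only [Nat.add_sub_cancel, Nat.add_one_sub_one]
  push_cast
  field_simp
  ring

theorem bentPow_sub_tangent (hn : n ≠ 0) (a c x : ℝ) :
    bentPow n c x - (bentPow n c a + bentPowDeriv n c a * (x - a)) =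
      -(c / (n * (n + 1))) * x ^ (n + 1) + x ^ n - (n * a ^ (n - 1) - c / n * a ^ n) * x -
        ((1 - n) * a ^ n + c / (n + 1) * a ^ (n + 1)) := by
  obtain ⟨m, rfl⟩ := Nat.exists_eq_succ_of_ne_zero hn
  simp only [bentPow, bentPowDeriv, Nat.succ_eq_add_one, Nat.add_sub_cancel]
  push_cast
  field_simp
  ring

theorem bentPowDeriv_lt_of_tangent_meets_graph (hn : 2 ≤ n) (hc : 0 < c) (ha : 0 ≤ a)
    (hab : a < b) (htangent : bentPow n c b = bentPow n c a + bentPowDeriv n c a * (b - a)) :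
    bentPowDeriv n c b < bentPowDeriv n c a :=
  have hg := hasDerivAt_bentPow (by lia : n ≠ 0) c
  have hg' := hasDerivAt_bentPowDeriv hn c
  deriv_lt_of_tangent_meets_graph hab
    (HasDerivAt.continuousOn fun x _ ↦ hg x) (fun x _ ↦ hg x)
    (HasDerivAt.continuousOn fun x _ ↦ hg' x) (fun x _ ↦ hg' x)
    (fun _ hx hroot _ hy ↦ sub_mul_mul_pow_neg_of_root_lt hc (ha.trans_lt hx.1) hroot hy.1)
    htangent

end bentPow

/-- If `c > 0`, `a·c < n(n-1)`, and `b > a` is a zero of `F` with `F > 0`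
on `(a, b)`, then `F'(b) < 0`. -/
theorem stmt_9 (n : ℕ) (hn : 2 ≤ n) (a c : ℝ) (ha : 0 < a) (hc : 0 < c)
    (hac : a * c < (n : ℝ) * ((n : ℝ) - 1))
    (c₁ c₂ : ℝ)
    (hc₁ : c₁ = (n : ℝ) * a ^ (n - 1) - (c / n) * a ^ n)
    (hc₂ : c₂ = (1 - (n : ℝ)) * a ^ n + (c / ((n : ℝ) + 1)) * a ^ (n + 1))
    (F : ℝ → ℝ)
    (hF : ∀ x : ℝ, F x = -(c / ((n : ℝ) * ((n : ℝ) + 1))) * x ^ (n + 1)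
      + x ^ n - c₁ * x - c₂)
    (b : ℝ) (hb : a < b) (hFb : F b = 0)
    (hFpos : ∀ x ∈ Set.Ioo a b, 0 < F x) :
    deriv F b < 0 := by
  have hn₀ : n ≠ 0 := by lia
  have hF_tangent (x : ℝ) :
      F x = bentPow n c x - (bentPow n c a + bentPowDeriv n c a * (x - a)) := by
    rw [bentPow_sub_tangent hn₀, hF, hc₁, hc₂]
  have hF_deriv : HasDerivAt F (bentPowDeriv n c b - bentPowDeriv n c a) b := by
    have htangent := (((hasDerivAt_id b).sub_const a).const_mul
      (bentPowDeriv n c a)).const_add (bentPow n c a)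
    rw [mul_one] at htangent
    exact funext hF_tangent ▸ (hasDerivAt_bentPow hn₀ c b).fun_sub htangent
  rw [hF_deriv.deriv, sub_neg]
  exact bentPowDeriv_lt_of_tangent_meets_graph hn hc ha.le hb
    (sub_eq_zero.1 ((hF_tangent b).symm.trans hFb))
end

section
/- Let n ≥ 2 be an integer and let c be a real number with 0 < c < n(n−1). Set c₁ = n − c/n, c₂ = (1−n) + c/(n+1), and F(x) = −(c/(n(n+1)))·x^(n+1) + xⁿ − c₁·x − c₂. If b > 1 satisfies F(b) = 0, then F'(b) ≠ −b^(n−1). -/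
/-!
With `a = 1`, `F` has a double zero at `1`, so `F x = r n x - t * r (n + 1) x` with
`t = c / (n * (n + 1))`, where `r m x = x ^ m - (1 + m * (x - 1))` is the remainder of the power
along its tangent line at `1`. If `F b = 0`, then `r n b = t * r (n + 1) b`, and eliminating `t`
gives `r (n + 1) b * (F' b + b ^ (n - 1))
  = (b - 1) ^ 2 * (n ^ 2 * b ^ (n - 1) - ∑ j < n - 1, (j + 1) * b ^ j)`.
For `b > 1` the sum is at most `(n - 1) ^ 2 * b ^ (n - 1)`, so the right side is positive, while
`r (n + 1) b ≥ 0` is Bernoulli's inequality. Hence even `F' b > -b ^ (n - 1)`.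
-/

open Finset

/-- The first-order Taylor remainder of `x ^ m` at `1`: the height of the power above its tangent
line there. The polynomial `F` of the theorem is a combination of two consecutive ones. -/
def powTangentRemainder {R : Type*} [CommRing R] (m : ℕ) (x : R) : R :=
  x ^ m - (1 + m * (x - 1))

section CommRing

variable {R : Type*} [CommRing R]

lemma sub_one_sq_mul_sum_succ_mul_pow (x : R) (k : ℕ) :
    (x - 1) ^ 2 * ∑ j ∈ range k, ((j : R) + 1) * x ^ j = k * x ^ (k + 1) - (k + 1) * x ^ k + 1 := by
  induction k with
  | zero => simp
  | succ k ih =>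
    rw [sum_range_succ, mul_add, ih]
    push_cast
    ring

lemma powTangentRemainder_elimination (x : R) (k : ℕ) :
    ((k + 1) * (x ^ k - 1) + x ^ k) * powTangentRemainder (k + 2) x
        - (k + 2) * (x ^ (k + 1) - 1) * powTangentRemainder (k + 1) x
      = (x - 1) ^ 2 * ((k + 1) ^ 2 * x ^ k - ∑ j ∈ range k, ((j : R) + 1) * x ^ j) := by
  rw [mul_sub ((x - 1) ^ 2), sub_one_sq_mul_sum_succ_mul_pow]
  simp only [powTangentRemainder]
  push_cast
  ring

end CommRing

section OrderedRing

variable {R : Type*} [CommRing R] [LinearOrder R] [IsStrictOrderedRing R] {x : R}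

lemma powTangentRemainder_nonneg (hx : -1 ≤ x) (m : ℕ) : 0 ≤ powTangentRemainder m x :=
  sub_nonneg.mpr (one_add_mul_sub_le_pow hx m)

lemma sum_succ_mul_pow_le (hx : 1 ≤ x) (k : ℕ) :
    ∑ j ∈ range k, ((j : R) + 1) * x ^ j ≤ k ^ 2 * x ^ k := by
  have hterm (j : ℕ) (hj : j ∈ range k) : ((j : R) + 1) * x ^ j ≤ k * x ^ k := by
    have hjk : j < k := mem_range.mp hj
    gcongr
    exact_mod_cast hjk
  calc ∑ j ∈ range k, ((j : R) + 1) * x ^ j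
      ≤ #(range k) • (k * x ^ k) := sum_le_card_nsmul _ _ _ hterm
    _ = k ^ 2 * x ^ k := by rw [card_range, nsmul_eq_mul]; ring

lemma sum_succ_mul_pow_lt (hx : 1 ≤ x) (k : ℕ) :
    ∑ j ∈ range k, ((j : R) + 1) * x ^ j < (k + 1) ^ 2 * x ^ k := by
  have hpow : 0 < x ^ k := pow_pos (zero_lt_one.trans_le hx) k
  have hsq : (k : R) ^ 2 < (k + 1) ^ 2 := by gcongr; exact lt_add_one _
  exact (sum_succ_mul_pow_le hx k).trans_lt (mul_lt_mul_of_pos_right hsq hpow)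

/-- The positive quantity is `F' x + x ^ k`, where
`F y = powTangentRemainder (k + 1) y - t * powTangentRemainder (k + 2) y`. -/
lemma pos_of_powTangentRemainder_eq_mul {t : R} (hx : 1 < x) {k : ℕ}
    (h : powTangentRemainder (k + 1) x = t * powTangentRemainder (k + 2) x) :
    0 < (k + 1) * (x ^ k - 1) - t * ((k + 2) * (x ^ (k + 1) - 1)) + x ^ k := by
  have hfactor :
      0 < (x - 1) ^ 2 * ((k + 1) ^ 2 * x ^ k - ∑ j ∈ range k, ((j : R) + 1) * x ^ j) :=
    mul_pos (pow_pos (sub_pos.mpr hx) 2) (sub_pos.mpr (sum_succ_mul_pow_lt hx.le k))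
  have hremainder : 0 ≤ powTangentRemainder (k + 2) x :=
    powTangentRemainder_nonneg (by linarith) _
  refine pos_of_mul_pos_right ?_ hremainder
  rw [← powTangentRemainder_elimination, h] at hfactor
  linear_combination hfactor

end OrderedRing

lemma hasDerivAt_powTangentRemainder (m : ℕ) (x : ℝ) :
    HasDerivAt (powTangentRemainder m) (m * (x ^ (m - 1) - 1)) x := by
  have htangent : HasDerivAt (fun y : ℝ ↦ 1 + m * (y - 1)) (m * 1) x :=
    (((hasDerivAt_id x).sub_const 1).const_mul (m : ℝ)).const_add 1
  rw [mul_sub]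
  exact (hasDerivAt_pow m x).sub htangent

theorem neg_pow_lt_deriv_of_powTangentRemainder_sub_eq_zero {n : ℕ} (hn : n ≠ 0) {t b : ℝ}
    (hb : 1 < b) (h : powTangentRemainder n b - t * powTangentRemainder (n + 1) b = 0) :
    -b ^ (n - 1) <
      deriv (fun x ↦ powTangentRemainder n x - t * powTangentRemainder (n + 1) x) b := by
  obtain ⟨k, rfl⟩ := Nat.exists_eq_succ_of_ne_zero hn
  have hderiv := (hasDerivAt_powTangentRemainder (k + 1) b).sub
    ((hasDerivAt_powTangentRemainder (k + 2) b).const_mul t)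
  have hpos := pos_of_powTangentRemainder_eq_mul hb (sub_eq_zero.mp h)
  refine lt_of_lt_of_eq ?_ hderiv.deriv.symm
  simp only [Nat.succ_eq_add_one, Nat.add_one_sub_one]
  push_cast
  linear_combination hpos

lemma eq_powTangentRemainder_sub {n : ℕ} (hn : n ≠ 0) (c x : ℝ) :
    -(c / ((n : ℝ) * ((n : ℝ) + 1))) * x ^ (n + 1) + x ^ n
        - ((n : ℝ) - c / n) * x - ((1 - (n : ℝ)) + c / ((n : ℝ) + 1))
      = powTangentRemainder n x
        - c / ((n : ℝ) * ((n : ℝ) + 1)) * powTangentRemainder (n + 1) x := by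
  have hn' : (n : ℝ) ≠ 0 := Nat.cast_ne_zero.mpr hn
  have hn₁ : (n : ℝ) + 1 ≠ 0 := by positivity
  simp only [powTangentRemainder]
  push_cast
  field_simp
  ring

theorem stmt_10_general (n : ℕ) (hn : n ≠ 0) (c c₁ c₂ : ℝ)
    (hc₁ : c₁ = (n : ℝ) - c / n)
    (hc₂ : c₂ = (1 - (n : ℝ)) + c / ((n : ℝ) + 1))
    (F : ℝ → ℝ)
    (hF : ∀ x : ℝ, F x = -(c / ((n : ℝ) * ((n : ℝ) + 1))) * x ^ (n + 1)
      + x ^ n - c₁ * x - c₂)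
    (b : ℝ) (hb : 1 < b) (hFb : F b = 0) :
    -b ^ (n - 1) < deriv F b := by
  obtain rfl : F = fun x ↦ powTangentRemainder n x
      - c / ((n : ℝ) * ((n : ℝ) + 1)) * powTangentRemainder (n + 1) x := by
    funext x
    rw [hF, hc₁, hc₂, eq_powTangentRemainder_sub hn]
  exact neg_pow_lt_deriv_of_powTangentRemainder_sub_eq_zero hn hb hFb

/-- With the normalization `a = 1`: if `0 < c < n(n-1)` and `b > 1` is a
zero of `F`, then `F'(b) ≠ -b^(n-1)` (so `κ = -b^(n-1)/F'(b) = 1` is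
impossible). -/
theorem stmt_10 (n : ℕ) (hn : 2 ≤ n) (c : ℝ) (hc : 0 < c)
    (hc' : c < (n : ℝ) * ((n : ℝ) - 1))
    (c₁ c₂ : ℝ)
    (hc₁ : c₁ = (n : ℝ) - c / n)
    (hc₂ : c₂ = (1 - (n : ℝ)) + c / ((n : ℝ) + 1))
    (F : ℝ → ℝ)
    (hF : ∀ x : ℝ, F x = -(c / ((n : ℝ) * ((n : ℝ) + 1))) * x ^ (n + 1)
      + x ^ n - c₁ * x - c₂)
    (b : ℝ) (hb : 1 < b) (hFb : F b = 0) :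
    deriv F b ≠ -b ^ (n - 1) := by
  exact (stmt_10_general n (by omega) c c₁ c₂ hc₁ hc₂ F hF b hb hFb).ne'
end

section
/- Suppose c > 0 and a·c < n(n−1), and let b > a satisfy F(b) = 0 and F(x) > 0 for all x ∈ (a, b). Then for every φ₀ ∈ (a, b) the function x ↦ x^(n−1)/F(x) is not integrable on [φ₀, b) (the improper integral ∫_{φ₀}^b x^(n−1)/F(x) dx diverges to +∞). -/
open MeasureTheory

/-!
A function that vanishes at `b` and is differentiable from the left there is `O(x - b)` as
`x → b⁻`. So dividing a function with nonzero limit by it gives a quotient at least of the order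
of `(x - b)⁻¹`, whose primitive `log |x - b|` is unbounded near `b`.
-/

section NonIntegrable

open Asymptotics Filter Set Topology

theorem sub_inv_isBigO_div_of_differentiableWithinAt {𝕜 𝕜' : Type*} [NontriviallyNormedField 𝕜]
    [NormedField 𝕜'] [NormedSpace 𝕜 𝕜'] {f g : 𝕜 → 𝕜'} {s : Set 𝕜} {b : 𝕜}
    (hf : ContinuousWithinAt f s b) (hfb : f b ≠ 0)
    (hg : DifferentiableWithinAt 𝕜 g s b) (hgb : g b = 0) (hg₀ : ∀ᶠ x in 𝓝[s] b, g x ≠ 0) :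
    (fun x ↦ (x - b)⁻¹) =O[𝓝[s] b] fun x ↦ f x / g x := by
  have g_isBigO : g =O[𝓝[s] b] fun x ↦ x - b := by
    simpa only [hgb, sub_zero] using hg.isBigO_sub
  have sub_inv_isBigO : (fun x ↦ (x - b)⁻¹) =O[𝓝[s] b] fun x ↦ (g x)⁻¹ :=
    g_isBigO.inv_rev (hg₀.mono fun _ hgx hgx' ↦ absurd hgx' hgx)
  have one_isBigO : (fun _ ↦ (1 : 𝕜)) =O[𝓝[s] b] f :=
    (isBigO_const_const 1 hfb _).trans ((isEquivalent_const_iff_tendsto hfb).2 hf).symm.isBigO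
  simpa only [one_mul, div_eq_mul_inv] using one_isBigO.mul sub_inv_isBigO

theorem not_integrableAtFilter_sub_inv_nhdsLT (b : ℝ) :
    ¬ IntegrableAtFilter (fun x ↦ (x - b)⁻¹) (𝓝[<] b) := by
  rintro ⟨s, hs, hint⟩
  obtain ⟨c, hcb, hcs⟩ := mem_nhdsLT_iff_exists_Ioo_subset.1 hs
  have hint' : IntervalIntegrable (fun x ↦ (x - b)⁻¹) volume c b :=
    (intervalIntegrable_iff_integrableOn_Ioo_of_le hcb.le).2 (hint.mono_set hcs)
  exact (intervalIntegrable_sub_inv_iff.1 hint').elim hcb.ne (· right_mem_uIcc)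

theorem not_integrableAtFilter_nhdsLT_of_sub_inv_isBigO {E : Type*} [NormedAddCommGroup E]
    {f : ℝ → E} {b : ℝ} (hf : (fun x ↦ (x - b)⁻¹) =O[𝓝[<] b] f) :
    ¬ IntegrableAtFilter f (𝓝[<] b) := by
  have hmeas : StronglyMeasurable fun x : ℝ ↦ (x - b)⁻¹ :=
    (measurable_id.sub_const b).inv.stronglyMeasurable
  exact fun hint ↦ not_integrableAtFilter_sub_inv_nhdsLT b
    (hf.integrableAtFilter hmeas.stronglyMeasurableAtFilter hint)

theorem stmt_11_general {𝕜 : Type*} [NormedField 𝕜] [NormedSpace ℝ 𝕜] {f F : ℝ → 𝕜} {b φ₀ : ℝ}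
    (hf : ContinuousWithinAt f (Iio b) b) (hfb : f b ≠ 0)
    (hF : DifferentiableWithinAt ℝ F (Iio b) b) (hFb : F b = 0)
    (hF₀ : ∀ᶠ x in 𝓝[<] b, F x ≠ 0) (hφ₀ : φ₀ < b) :
    ¬ IntegrableOn (fun x ↦ f x / F x) (Ico φ₀ b) := fun hint ↦
  not_integrableAtFilter_nhdsLT_of_sub_inv_isBigO
    (sub_inv_isBigO_div_of_differentiableWithinAt hf hfb hF hFb hF₀)
    ⟨Ico φ₀ b, Ico_mem_nhdsLT hφ₀, hint⟩

end NonIntegrable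

/-- If `c > 0`, `a·c < n(n-1)`, and `b > a` is a zero of `F` with `F > 0`
on `(a, b)`, then `x ↦ x^(n-1)/F(x)` is not integrable on `[φ₀, b)`
for any `φ₀ ∈ (a, b)`. -/
theorem stmt_11 (n : ℕ) (hn : 2 ≤ n) (a c : ℝ) (ha : 0 < a) (hc : 0 < c)
    (hac : a * c < (n : ℝ) * ((n : ℝ) - 1))
    (c₁ c₂ : ℝ)
    (hc₁ : c₁ = (n : ℝ) * a ^ (n - 1) - (c / n) * a ^ n)
    (hc₂ : c₂ = (1 - (n : ℝ)) * a ^ n + (c / ((n : ℝ) + 1)) * a ^ (n + 1))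
    (F : ℝ → ℝ)
    (hF : ∀ x : ℝ, F x = -(c / ((n : ℝ) * ((n : ℝ) + 1))) * x ^ (n + 1)
      + x ^ n - c₁ * x - c₂)
    (b : ℝ) (hb : a < b) (hFb : F b = 0)
    (hFpos : ∀ x ∈ Set.Ioo a b, 0 < F x) :
    ∀ φ₀ ∈ Set.Ioo a b,
      ¬ IntegrableOn (fun x => x ^ (n - 1) / F x) (Set.Ico φ₀ b) := by
  have hFdiff : Differentiable ℝ F := by
    rw [funext hF]
    fun_prop
  exact fun φ₀ hφ₀ ↦ stmt_11_general (by fun_prop) (pow_ne_zero _ (ha.trans hb).ne')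
    (hFdiff b).differentiableWithinAt hFb
    (Filter.mem_of_superset (Ioo_mem_nhdsLT hb) fun x hx ↦ (hFpos x hx).ne') hφ₀.2
end

section
/- Suppose c > 0 and a·c < n(n−1), and let b > a satisfy F(b) = 0 and F(x) > 0 for all x ∈ (a, b). Then for every φ₀ ∈ (a, b) the function x ↦ √(x^(n−1)/F(x)) is integrable on [φ₀, b) (the improper integral ∫_{φ₀}^b √(x^(n−1)/F(x)) dx is finite). -/
open MeasureTheory

/-! The only singularity of the integrand on `[φ₀, b)` is at the zero `b` of `F`. If `F' b ≠ 0`,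
the singularity has order `(b - x) ^ (-1 / 2)` and is integrable. If `F' b` vanished, then `F` would
have double zeros at both `a` and `b`, and applying Rolle's theorem to `F`, then to `F'` on both
sides of the critical point so obtained, would give two zeros in `(a, b)` of
`F'' x = x ^ (n - 2) * (n * (n - 1) - c * x)`, which has at most one positive zero. -/

theorem continuousOn_dslope_of_differentiableAt {𝕜 E : Type*} [NontriviallyNormedField 𝕜]
    [NormedAddCommGroup E] [NormedSpace 𝕜 E] {f : 𝕜 → E} {s : Set 𝕜} {b : 𝕜}
    (hf : ContinuousOn f s) (hb : DifferentiableAt 𝕜 f b) : ContinuousOn (dslope f b) s := by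
  intro x hx
  rcases eq_or_ne x b with rfl | hne
  · exact (continuousAt_dslope_same.2 hb).continuousWithinAt
  · exact (continuousWithinAt_dslope_of_ne hne).2 (hf x hx)

section SimpleZero

variable {f g : ℝ → ℝ} {f' p b r : ℝ}

theorem integrableOn_Ico_sub_rpow (hr : -1 < r) :
    IntegrableOn (fun x => (b - x) ^ r) (Set.Ico p b) := by
  rcases le_or_gt b p with hbp | hpb
  · simp [Set.Ico_eq_empty_of_le hbp]
  · have hint : IntervalIntegrable (fun x => (b - x) ^ r) volume p b := by
      simpa using
        (intervalIntegral.intervalIntegrable_rpow' (a := b - p) (b := 0) hr).comp_sub_left b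
    exact (intervalIntegrable_iff_integrableOn_Ico_of_le hpb.le).1 hint

theorem integrableOn_Ico_abs_rpow_of_simple_zero (hr : -1 < r) (hf : ContinuousOn f (Set.Icc p b))
    (hfb : f b = 0) (hderiv : HasDerivAt f f' b) (hf' : f' ≠ 0) (hne : ∀ x ∈ Set.Ico p b, f x ≠ 0) :
    IntegrableOn (fun x => |f x| ^ r) (Set.Ico p b) := by
  have hfactor (x : ℝ) : f x = (x - b) * dslope f b x := by
    simpa [hfb] using (sub_smul_dslope f b x).symm
  have hslope_ne : ∀ x ∈ Set.Icc p b, dslope f b x ≠ 0 := by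
    intro x hx
    rcases hx.2.eq_or_lt with rfl | hxb
    · rwa [dslope_same, hderiv.deriv]
    · exact right_ne_zero_of_mul (hfactor x ▸ hne x ⟨hx.1, hxb⟩)
  have hslope_cont : ContinuousOn (fun x => |dslope f b x| ^ r) (Set.Icc p b) :=
    (continuousOn_dslope_of_differentiableAt hf hderiv.differentiableAt).abs.rpow_const
      fun x hx => .inl (abs_ne_zero.2 (hslope_ne x hx))
  refine ((integrableOn_Ico_sub_rpow hr).mul_continuousOn_of_subset hslope_cont
    measurableSet_Ico isCompact_Icc Set.Ico_subset_Icc_self).congr_fun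
    (fun x hx => ?_) measurableSet_Ico
  have hbx : |x - b| = b - x := by rw [abs_sub_comm, abs_of_pos (sub_pos.2 hx.2)]
  simp only [hfactor x, abs_mul, hbx, Real.mul_rpow (sub_pos.2 hx.2).le (abs_nonneg _)]

theorem integrableOn_Ico_sqrt_div_of_simple_zero (hg : ContinuousOn g (Set.Icc p b))
    (hf : ContinuousOn f (Set.Icc p b)) (hfb : f b = 0) (hderiv : HasDerivAt f f' b) (hf' : f' ≠ 0)
    (hpos : ∀ x ∈ Set.Ico p b, 0 < f x) :
    IntegrableOn (fun x => √(g x / f x)) (Set.Ico p b) := by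
  have hint : IntegrableOn (fun x => |f x| ^ (-(1 / 2) : ℝ)) (Set.Ico p b) :=
    integrableOn_Ico_abs_rpow_of_simple_zero (by norm_num) hf hfb hderiv hf'
      fun x hx => (hpos x hx).ne'
  refine (hint.continuousOn_mul_of_subset hg.sqrt isCompact_Icc measurableSet_Ico
    Set.Ico_subset_Icc_self).congr_fun (fun x hx => ?_) measurableSet_Ico
  have hfx : 0 ≤ f x := (hpos x hx).le
  beta_reduce
  rw [abs_of_nonneg hfx, Real.rpow_neg hfx, ← Real.sqrt_eq_rpow, Real.sqrt_div' _ hfx,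
    div_eq_mul_inv]

end SimpleZero

theorem exists_lt_second_deriv_eq_zero_of_critical_endpoints {f f' f'' : ℝ → ℝ} {a b : ℝ}
    (hab : a < b) (hfc : ContinuousOn f (Set.Icc a b)) (hfc' : ContinuousOn f' (Set.Icc a b))
    (hf : ∀ x ∈ Set.Ioo a b, HasDerivAt f (f' x) x)
    (hf' : ∀ x ∈ Set.Ioo a b, HasDerivAt f' (f'' x) x)
    (hfab : f a = f b) (ha : f' a = 0) (hb : f' b = 0) :
    ∃ x ∈ Set.Ioo a b, ∃ y ∈ Set.Ioo a b, x < y ∧ f'' x = 0 ∧ f'' y = 0 := by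
  obtain ⟨z, ⟨haz, hzb⟩, hz⟩ := exists_hasDerivAt_eq_zero hab hfc hfab hf
  obtain ⟨x, ⟨hax, hxz⟩, hx⟩ := exists_hasDerivAt_eq_zero haz
    (hfc'.mono (Set.Icc_subset_Icc_right hzb.le)) (ha.trans hz.symm)
    fun x hx => hf' x ⟨hx.1, hx.2.trans hzb⟩
  obtain ⟨y, ⟨hzy, hyb⟩, hy⟩ := exists_hasDerivAt_eq_zero hzb
    (hfc'.mono (Set.Icc_subset_Icc_left haz.le)) (hz.trans hb.symm)
    fun y hy => hf' y ⟨haz.trans hy.1, hy.2⟩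
  exact ⟨x, ⟨hax, hxz.trans hzb⟩, y, ⟨haz.trans hzy, hyb⟩, hxz.trans hzy, hx, hy⟩

/-- The polynomial `F` for which `F x / x ^ (n - 1)` is the momentum profile of a radial constant
scalar curvature Kähler metric, with `c₁` and `c₂` replaced by their values in terms of `a`. It is
the difference between `x ^ n - c / (n * (n + 1)) * x ^ (n + 1)` and its tangent line at `a`. -/
noncomputable def momentumPolynomial (n : ℕ) (a c x : ℝ) : ℝ :=
  -(c / ((n : ℝ) * ((n : ℝ) + 1))) * x ^ (n + 1) + x ^ n
    - ((n : ℝ) * a ^ (n - 1) - (c / n) * a ^ n) * x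
    - ((1 - (n : ℝ)) * a ^ n + (c / ((n : ℝ) + 1)) * a ^ (n + 1))

/-- The derivative of `momentumPolynomial n a c`, in a form that exhibits its zero at `a`. -/
noncomputable def momentumPolynomialDeriv (n : ℕ) (a c x : ℝ) : ℝ :=
  n * (x ^ (n - 1) - a ^ (n - 1)) - c / n * (x ^ n - a ^ n)

section MomentumPolynomial

variable {n : ℕ} {a b c : ℝ}

theorem momentumPolynomial_self (hn : n ≠ 0) : momentumPolynomial n a c a = 0 := by
  obtain ⟨k, rfl⟩ := Nat.exists_eq_succ_of_ne_zero hn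
  simp only [momentumPolynomial, Nat.succ_eq_add_one, Nat.add_one_sub_one]
  push_cast
  field_simp
  ring

theorem momentumPolynomialDeriv_self : momentumPolynomialDeriv n a c a = 0 := by
  simp [momentumPolynomialDeriv]

theorem hasDerivAt_momentumPolynomial (x : ℝ) :
    HasDerivAt (momentumPolynomial n a c) (momentumPolynomialDeriv n a c x) x := by
  refine (((((hasDerivAt_pow (n + 1) x).const_mul _).add (hasDerivAt_pow n x)).sub
    ((hasDerivAt_id x).const_mul _)).sub_const _).congr_deriv ?_
  simp only [momentumPolynomialDeriv, Nat.add_sub_cancel]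
  push_cast
  field_simp
  ring

theorem hasDerivAt_momentumPolynomialDeriv (hn : 2 ≤ n) (x : ℝ) :
    HasDerivAt (momentumPolynomialDeriv n a c) (x ^ (n - 2) * (n * (n - 1) - c * x)) x := by
  obtain ⟨k, rfl⟩ := Nat.exists_eq_add_of_le' hn
  refine ((((hasDerivAt_pow (k + 2 - 1) x).sub_const _).const_mul _).sub
    (((hasDerivAt_pow (k + 2) x).sub_const _).const_mul _)).congr_deriv ?_
  simp only [Nat.add_sub_cancel, show k + 2 - 1 = k + 1 from rfl]
  push_cast
  field_simp
  ring

theorem continuous_momentumPolynomial : Continuous (momentumPolynomial n a c) := by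
  unfold momentumPolynomial
  fun_prop

theorem continuous_momentumPolynomialDeriv : Continuous (momentumPolynomialDeriv n a c) := by
  unfold momentumPolynomialDeriv
  fun_prop

theorem momentumPolynomialDeriv_ne_zero_of_zero (hn : 2 ≤ n) (ha : 0 < a) (hab : a < b)
    (hb : momentumPolynomial n a c b = 0) : momentumPolynomialDeriv n a c b ≠ 0 := by
  intro hb'
  obtain ⟨x, hx, y, hy, hxy, hx₀, hy₀⟩ :=
    exists_lt_second_deriv_eq_zero_of_critical_endpoints hab
      continuous_momentumPolynomial.continuousOn continuous_momentumPolynomialDeriv.continuousOn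
      (fun x _ => hasDerivAt_momentumPolynomial x)
      (fun x _ => hasDerivAt_momentumPolynomialDeriv hn x)
      ((momentumPolynomial_self (by lia)).trans hb.symm) momentumPolynomialDeriv_self hb'
  have hroot {z : ℝ} (hz : z ∈ Set.Ioo a b)
      (hz₀ : z ^ (n - 2) * (n * (n - 1) - c * z) = 0) : n * (n - 1) = c * z :=
    sub_eq_zero.1 ((mul_eq_zero_iff_left (pow_pos (ha.trans hz.1) _).ne').1 hz₀)
  have hc : c = 0 := by
    have hcxy : c * (y - x) = 0 := by
      rw [mul_sub, ← hroot hx hx₀, ← hroot hy hy₀, sub_self]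
    exact (mul_eq_zero_iff_right (sub_pos.2 hxy).ne').1 hcxy
  have hn' : (2 : ℝ) ≤ n := by exact_mod_cast hn
  have hcoeff : 0 < (n : ℝ) * (n - 1) := mul_pos (by linarith) (by linarith)
  exact hcoeff.ne' (by rw [hroot hx hx₀, hc, zero_mul])

end MomentumPolynomial

/-- If `c > 0`, `a·c < n(n-1)`, and `b > a` is a zero of `F` with `F > 0`
on `(a, b)`, then `x ↦ √(x^(n-1)/F(x))` is integrable on `[φ₀, b)` for
every `φ₀ ∈ (a, b)`. -/
theorem stmt_12 (n : ℕ) (hn : 2 ≤ n) (a c : ℝ) (ha : 0 < a) (hc : 0 < c)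
    (hac : a * c < (n : ℝ) * ((n : ℝ) - 1))
    (c₁ c₂ : ℝ)
    (hc₁ : c₁ = (n : ℝ) * a ^ (n - 1) - (c / n) * a ^ n)
    (hc₂ : c₂ = (1 - (n : ℝ)) * a ^ n + (c / ((n : ℝ) + 1)) * a ^ (n + 1))
    (F : ℝ → ℝ)
    (hF : ∀ x : ℝ, F x = -(c / ((n : ℝ) * ((n : ℝ) + 1))) * x ^ (n + 1)
      + x ^ n - c₁ * x - c₂)
    (b : ℝ) (hb : a < b) (hFb : F b = 0)
    (hFpos : ∀ x ∈ Set.Ioo a b, 0 < F x) :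
    ∀ φ₀ ∈ Set.Ioo a b,
      IntegrableOn (fun x => Real.sqrt (x ^ (n - 1) / F x)) (Set.Ico φ₀ b) := by
  intro φ₀ hφ₀
  obtain rfl : F = momentumPolynomial n a c := by
    funext x
    rw [hF, hc₁, hc₂, momentumPolynomial]
  exact integrableOn_Ico_sqrt_div_of_simple_zero (continuous_pow (n - 1)).continuousOn
    continuous_momentumPolynomial.continuousOn hFb (hasDerivAt_momentumPolynomial b)
    (momentumPolynomialDeriv_ne_zero_of_zero hn ha hb hFb)
    fun x hx => hFpos x ⟨hφ₀.1.trans_le hx.1, hx.2⟩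
end

section
/- H₃(a,b) > 0, i.e., (∫ₐᵇ x·Q(x)/(1+λx) dx)·(∫ₐᵇ Q(x)/x dx) > (∫ₐᵇ Q(x) dx)·(∫ₐᵇ Q(x)/(1+λx) dx). -/
/-!
Write `Q x = x * (1 + λ * x) * w x` and let `Mₖ = ∫ₐᵇ xᵏ w` be the moments of the weight `w > 0`.
The four integrals are then `M₂`, `M₀ + λ M₁`, `M₁ + λ M₂` and `M₁`; in
`M₂ (M₀ + λ M₁) - (M₁ + λ M₂) M₁ = M₂ M₀ - M₁ ^ 2` the terms in `λ` cancel, and the right-hand side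
is positive by the strict Cauchy–Schwarz inequality.
-/

open Set intervalIntegral

section WeightedIntegrals

variable {a b : ℝ} {f w : ℝ → ℝ}

theorem integral_sq_const_mul_sub_mul (hab : a ≤ b) (hf : ContinuousOn f (Icc a b))
    (hw : ContinuousOn w (Icc a b)) (c d : ℝ) :
    ∫ x in a..b, (c * f x - d) ^ 2 * w x =
      c ^ 2 * (∫ x in a..b, f x ^ 2 * w x) - 2 * c * d * (∫ x in a..b, f x * w x) +
        d ^ 2 * ∫ x in a..b, w x := by
  have expand (x : ℝ) : (c * f x - d) ^ 2 * w x =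
      c ^ 2 * (f x ^ 2 * w x) - 2 * c * d * (f x * w x) + d ^ 2 * w x := by ring
  simp_rw [expand]
  rw [integral_add, integral_sub, integral_const_mul, integral_const_mul, integral_const_mul]
  all_goals exact ContinuousOn.intervalIntegrable_of_Icc hab (by fun_prop)

theorem sq_integral_mul_lt_integral_sq_mul_mul_integral
    (hf : ContinuousOn f (Icc a b)) (hw : ContinuousOn w (Icc a b))
    (hw_pos : ∀ x ∈ Icc a b, 0 < w x) (hf_ne : ∃ x ∈ Icc a b, ∃ y ∈ Icc a b, f x ≠ f y) :
    (∫ x in a..b, f x * w x) ^ 2 < (∫ x in a..b, f x ^ 2 * w x) * ∫ x in a..b, w x := by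
  obtain ⟨x, hx, y, hy, hxy⟩ := hf_ne
  have hab : a < b := not_le.1 fun hba ↦ hxy (congrArg f (subsingleton_Icc_of_ge hba hx hy))
  set M₀ := ∫ x in a..b, w x
  set M₁ := ∫ x in a..b, f x * w x
  set M₂ := ∫ x in a..b, f x ^ 2 * w x
  have M₀_pos : 0 < M₀ := intervalIntegral_pos_of_pos_on (hw.intervalIntegrable_of_Icc hab.le)
    (fun t ht ↦ hw_pos t (Ioo_subset_Icc_self ht)) hab
  have exists_ne : ∃ z ∈ Icc a b, M₀ * f z - M₁ ≠ 0 := by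
    by_contra! h
    exact hxy (mul_left_cancel₀ M₀_pos.ne' (by linarith [h x hx, h y hy]))
  have variance_pos : 0 < ∫ x in a..b, (M₀ * f x - M₁) ^ 2 * w x := by
    obtain ⟨z, hz, hne⟩ := exists_ne
    exact integral_pos hab (by fun_prop)
      (fun t ht ↦ mul_nonneg (sq_nonneg _) (hw_pos t (Ioc_subset_Icc_self ht)).le)
      ⟨z, hz, mul_pos (sq_pos_of_ne_zero hne) (hw_pos z hz)⟩
  have variance_eq : ∫ x in a..b, (M₀ * f x - M₁) ^ 2 * w x = M₀ * (M₂ * M₀ - M₁ ^ 2) := by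
    rw [integral_sq_const_mul_sub_mul hab.le hf hw]
    ring
  exact sub_pos.1 (pos_of_mul_pos_right (variance_eq ▸ variance_pos) M₀_pos.le)

theorem integral_one_add_const_mul_mul (hab : a ≤ b) (hf : ContinuousOn f (Icc a b))
    (hw : ContinuousOn w (Icc a b)) (c : ℝ) :
    ∫ x in a..b, (1 + c * f x) * w x = (∫ x in a..b, w x) + c * ∫ x in a..b, f x * w x := by
  simp_rw [add_mul, one_mul, mul_assoc]
  rw [integral_add, integral_const_mul]
  all_goals exact ContinuousOn.intervalIntegrable_of_Icc hab (by fun_prop)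

theorem integral_one_add_const_mul_mul_mul_integral_lt
    (hf : ContinuousOn f (Icc a b)) (hw : ContinuousOn w (Icc a b))
    (hw_pos : ∀ x ∈ Icc a b, 0 < w x) (hf_ne : ∃ x ∈ Icc a b, ∃ y ∈ Icc a b, f x ≠ f y) (c : ℝ) :
    (∫ x in a..b, (1 + c * f x) * (f x * w x)) * (∫ x in a..b, f x * w x) <
      (∫ x in a..b, f x ^ 2 * w x) * ∫ x in a..b, (1 + c * f x) * w x := by
  have cauchy_schwarz := sq_integral_mul_lt_integral_sq_mul_mul_integral hf hw hw_pos hf_ne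
  obtain ⟨x, hx, -⟩ := hf_ne
  have hab : a ≤ b := hx.1.trans hx.2
  rw [integral_one_add_const_mul_mul hab hf hw,
    integral_one_add_const_mul_mul (w := fun x ↦ f x * w x) hab hf (hf.mul hw)]
  simp_rw [← mul_assoc, ← sq]
  linarith

end WeightedIntegrals

theorem stmt_16_general {lam a b : ℝ} {Q : ℝ → ℝ} (ha : 0 < a) (hab : a < b)
    (hlam : ∀ x ∈ Icc a b, 0 < 1 + lam * x) (hQ : ContinuousOn Q (Icc a b))
    (hQ_pos : ∀ x ∈ Icc a b, 0 < Q x) :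
    (∫ x in a..b, x * Q x / (1 + lam * x)) * (∫ x in a..b, Q x / x)
      > (∫ x in a..b, Q x) * (∫ x in a..b, Q x / (1 + lam * x)) := by
  have hpos : ∀ x ∈ Icc a b, 0 < x := fun x hx ↦ ha.trans_le hx.1
  let w : ℝ → ℝ := fun x ↦ Q x / (x * (1 + lam * x))
  have hw : ContinuousOn w (Icc a b) :=
    hQ.div (by fun_prop) fun x hx ↦ (mul_pos (hpos x hx) (hlam x hx)).ne'
  have hw_pos : ∀ x ∈ Icc a b, 0 < w x := fun x hx ↦
    div_pos (hQ_pos x hx) (mul_pos (hpos x hx) (hlam x hx))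
  have key := integral_one_add_const_mul_mul_mul_integral_lt (f := fun x ↦ x) continuousOn_id
    hw hw_pos ⟨a, left_mem_Icc.2 hab.le, b, right_mem_Icc.2 hab.le, hab.ne⟩ lam
  have congr_Icc {g h : ℝ → ℝ} (hgh : EqOn g h (Icc a b)) :
      ∫ x in a..b, g x = ∫ x in a..b, h x := integral_congr (by rwa [uIcc_of_le hab.le])
  convert key using 2 <;> refine congr_Icc fun x hx ↦ ?_
  all_goals
    have hx_ne := (hpos x hx).ne'
    have hlam_ne := (hlam x hx).ne'
    simp only [w]
    generalize 1 + lam * x = d at hlam_ne ⊢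
    field_simp

theorem one_add_mul_pos_of_lt_neg_one_div {lam x : ℝ} (hlam : lam < 0) (hx : x < -1 / lam) :
    0 < 1 + lam * x := by
  linarith [(lt_div_iff_of_neg hlam).1 hx]

/-- `H₃(a,b) > 0`: for `λ < 0`, `0 < a < b < -1/λ` and
`Q(x) = (1+λx)^m·x^(n-1)`,
`(∫ₐᵇ x·Q/(1+λx))·(∫ₐᵇ Q/x) > (∫ₐᵇ Q)·(∫ₐᵇ Q/(1+λx))`. -/
theorem stmt_16 (m n : ℕ) (hm : 1 ≤ m) (hn : 2 ≤ n) (lam : ℝ) (hlam : lam < 0)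
    (a b : ℝ) (ha : 0 < a) (hab : a < b) (hb : b < -1 / lam)
    (Q : ℝ → ℝ)
    (hQ : ∀ x : ℝ, Q x = (1 + lam * x) ^ m * x ^ (n - 1)) :
    (∫ x in a..b, x * Q x / (1 + lam * x)) * (∫ x in a..b, Q x / x)
      > (∫ x in a..b, Q x) * (∫ x in a..b, Q x / (1 + lam * x)) := by
  have hpos : ∀ x ∈ Icc a b, 0 < 1 + lam * x := fun x hx ↦
    one_add_mul_pos_of_lt_neg_one_div hlam (hx.2.trans_lt hb)
  obtain rfl : Q = fun x ↦ (1 + lam * x) ^ m * x ^ (n - 1) := funext hQ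
  exact stmt_16_general ha hab hpos (by fun_prop) fun x hx ↦
    mul_pos (pow_pos (hpos x hx) m) (pow_pos (ha.trans_le hx.1) (n - 1))
end

section
/- For every real number c_M > 0 there exist real numbers a, b with 0 < a < b < −1/λ such that n(n−1)·H₁(a,b) = c_M·H₂(a,b). -/
/-!
Both sides are Cauchy–Schwarz defects `(∫ w / φ) (∫ φ w) - (∫ w) ^ 2` of the same weight `w = Q`,
with `φ x = x` for `H₁` and, up to the factor `-1/λ`, with `φ x = 1 + λ x` for `H₂`. By Lagrange's
identity such a defect is half the double integral of
`w x * w y * (φ x - φ y) ^ 2 / (φ x * φ y)`, so comparing `K * H₁` with `c * H₂` reduces to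
comparing `K * (1 + λ x) * (1 + λ y)` with `-c * λ * x * y`. The two agree at a point `x = y = t` of
`(0, -1/λ)`; the first is larger when `x, y ≤ t`, the second when `x, y ≥ t`. Hence
`K * H₁ - c * H₂` takes both signs on the convex set `0 < a < b < -1/λ`, so it vanishes somewhere.
-/

open MeasureTheory Set

section CauchySchwarzDefect

variable {Ω : Type*} {w φ ψ : Ω → ℝ}

/-- The kernel whose double integral against the weight is twice the Cauchy–Schwarz defect. -/
noncomputable def defectKernel (φ : Ω → ℝ) (x y : Ω) : ℝ :=
  (φ x - φ y) ^ 2 / (φ x * φ y)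

theorem mul_defectKernel {x y : Ω} (hx : φ x ≠ 0) (hy : φ y ≠ 0) :
    w x * w y * defectKernel φ x y =
      w x / φ x * (φ y * w y) + φ x * w x * (w y / φ y) - 2 * (w x * w y) := by
  rw [defectKernel]
  field_simp
  ring

variable [MeasurableSpace Ω] {μ : Measure Ω}

/-- The defect in the Cauchy–Schwarz inequality `(∫ w) ^ 2 ≤ (∫ w / φ) (∫ φ w)`. -/
noncomputable def cauchySchwarzDefect (μ : Measure Ω) (w φ : Ω → ℝ) : ℝ :=
  (∫ x, w x / φ x ∂μ) * (∫ x, φ x * w x ∂μ) - (∫ x, w x ∂μ) ^ 2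

/-- The conditions under which `cauchySchwarzDefect μ w φ` is free of junk values: its three
integrals converge and its quotient has a nonzero denominator almost everywhere. -/
structure HasDefect (μ : Measure Ω) (w φ : Ω → ℝ) : Prop where
  weight : Integrable w μ
  div : Integrable (fun x ↦ w x / φ x) μ
  mul : Integrable (fun x ↦ φ x * w x) μ
  ne_zero : ∀ᵐ x ∂μ, φ x ≠ 0

namespace HasDefect

theorem mul_defectKernel_ae_eq (h : HasDefect μ w φ) :
    (fun z : Ω × Ω ↦ w z.1 * w z.2 * defectKernel φ z.1 z.2) =ᵐ[μ.prod μ] fun z ↦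
      w z.1 / φ z.1 * (φ z.2 * w z.2) + φ z.1 * w z.1 * (w z.2 / φ z.2)
        - 2 * (w z.1 * w z.2) := by
  filter_upwards [Measure.quasiMeasurePreserving_fst.ae h.ne_zero,
    Measure.quasiMeasurePreserving_snd.ae h.ne_zero] with z hz₁ hz₂
  exact mul_defectKernel hz₁ hz₂

theorem integrable_mul_defectKernel (h : HasDefect μ w φ) :
    Integrable (fun z : Ω × Ω ↦ w z.1 * w z.2 * defectKernel φ z.1 z.2) (μ.prod μ) :=
  (((h.div.mul_prod h.mul).add (h.mul.mul_prod h.div)).sub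
    ((h.weight.mul_prod h.weight).const_mul 2)).congr h.mul_defectKernel_ae_eq.symm

variable [SFinite μ]

theorem integral_mul_defectKernel (h : HasDefect μ w φ) :
    ∫ z : Ω × Ω, w z.1 * w z.2 * defectKernel φ z.1 z.2 ∂μ.prod μ =
      2 * cauchySchwarzDefect μ w φ := by
  have hdm := h.div.mul_prod h.mul
  have hmd := h.mul.mul_prod h.div
  have hww := (h.weight.mul_prod h.weight).const_mul 2
  rw [integral_congr_ae h.mul_defectKernel_ae_eq, integral_sub _ hww,
    integral_add hdm hmd, integral_const_mul,
    integral_prod_mul (fun x ↦ w x / φ x) (fun x ↦ φ x * w x),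
    integral_prod_mul (fun x ↦ φ x * w x) (fun x ↦ w x / φ x), integral_prod_mul w w,
    cauchySchwarzDefect]
  · ring
  · exact hdm.add hmd

theorem const_mul_cauchySchwarzDefect_le {α β : ℝ} (hφ : HasDefect μ w φ) (hψ : HasDefect μ w ψ)
    (hw : ∀ᵐ x ∂μ, 0 ≤ w x)
    (hle : ∀ᵐ z ∂μ.prod μ, α * defectKernel φ z.1 z.2 ≤ β * defectKernel ψ z.1 z.2) :
    α * cauchySchwarzDefect μ w φ ≤ β * cauchySchwarzDefect μ w ψ := by
  have hint : ∫ z : Ω × Ω, α * (w z.1 * w z.2 * defectKernel φ z.1 z.2) ∂μ.prod μ ≤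
      ∫ z : Ω × Ω, β * (w z.1 * w z.2 * defectKernel ψ z.1 z.2) ∂μ.prod μ := by
    refine integral_mono_ae (hφ.integrable_mul_defectKernel.const_mul α)
      (hψ.integrable_mul_defectKernel.const_mul β) ?_
    filter_upwards [Measure.quasiMeasurePreserving_fst.ae hw,
      Measure.quasiMeasurePreserving_snd.ae hw, hle] with z hz₁ hz₂ hz
    linarith [mul_le_mul_of_nonneg_left hz (mul_nonneg hz₁ hz₂)]
  rw [integral_const_mul, integral_const_mul, hφ.integral_mul_defectKernel,
    hψ.integral_mul_defectKernel] at hint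
  linarith

end HasDefect

end CauchySchwarzDefect

section Interval

variable {w φ ψ : ℝ → ℝ} {a b : ℝ}

theorem cauchySchwarzDefect_restrict_Ioc (hab : a ≤ b) (w φ : ℝ → ℝ) :
    cauchySchwarzDefect (volume.restrict (Ioc a b)) w φ =
      (∫ x in a..b, w x / φ x) * (∫ x in a..b, φ x * w x) - (∫ x in a..b, w x) ^ 2 := by
  simp only [cauchySchwarzDefect, intervalIntegral.integral_of_le hab]

theorem HasDefect.restrict_Ioc_of_continuousOn (hw : ContinuousOn w (Icc a b))
    (hφ : ContinuousOn φ (Icc a b)) (hφ₀ : ∀ x ∈ Icc a b, φ x ≠ 0) :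
    HasDefect (volume.restrict (Ioc a b)) w φ where
  weight := hw.integrableOn_Icc.mono_set Ioc_subset_Icc_self
  div := (hw.div hφ hφ₀).integrableOn_Icc.mono_set Ioc_subset_Icc_self
  mul := (hφ.mul hw).integrableOn_Icc.mono_set Ioc_subset_Icc_self
  ne_zero := ae_restrict_of_forall_mem measurableSet_Ioc fun x hx ↦ hφ₀ x (Ioc_subset_Icc_self hx)

theorem const_mul_cauchySchwarzDefect_restrict_Ioc_le {α β : ℝ} (hw : ContinuousOn w (Icc a b))
    (hφ : ContinuousOn φ (Icc a b)) (hψ : ContinuousOn ψ (Icc a b))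
    (hw₀ : ∀ x ∈ Icc a b, 0 ≤ w x) (hφ₀ : ∀ x ∈ Icc a b, φ x ≠ 0)
    (hψ₀ : ∀ x ∈ Icc a b, ψ x ≠ 0)
    (hle : ∀ x ∈ Icc a b, ∀ y ∈ Icc a b, α * defectKernel φ x y ≤ β * defectKernel ψ x y) :
    α * cauchySchwarzDefect (volume.restrict (Ioc a b)) w φ ≤
      β * cauchySchwarzDefect (volume.restrict (Ioc a b)) w ψ := by
  refine (HasDefect.restrict_Ioc_of_continuousOn hw hφ hφ₀).const_mul_cauchySchwarzDefect_le
    (.restrict_Ioc_of_continuousOn hw hψ hψ₀) ?_ ?_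
  · exact ae_restrict_of_forall_mem measurableSet_Ioc fun x hx ↦ hw₀ x (Ioc_subset_Icc_self hx)
  · rw [Measure.prod_restrict]
    exact ae_restrict_of_forall_mem (measurableSet_Ioc.prod measurableSet_Ioc) fun z hz ↦
      hle z.1 (Ioc_subset_Icc_self hz.1) z.2 (Ioc_subset_Icc_self hz.2)

theorem continuousOn_intervalIntegral_endpoints {f : ℝ → ℝ} {s : Set ℝ} (hs : IsOpen s)
    [s.OrdConnected] (hf : ContinuousOn f s) :
    ContinuousOn (fun p : ℝ × ℝ ↦ ∫ x in p.1..p.2, f x) (s ×ˢ s) := by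
  rintro ⟨a, b⟩ ⟨ha, hb⟩
  have hint : IntervalIntegrable f volume a b :=
    (hf.mono (OrdConnected.uIcc_subset ‹_› ha hb)).intervalIntegrable
  exact (intervalIntegral.integral_hasFDerivAt hint
    (hf.stronglyMeasurableAtFilter hs a ha) (hf.stronglyMeasurableAtFilter hs b hb)
    (hf.continuousAt (hs.mem_nhds ha))
    (hf.continuousAt (hs.mem_nhds hb))).continuousAt.continuousWithinAt

/-- The pairs of endpoints of the nondegenerate compact intervals contained in `(l, u)`. -/
def subintervals (l u : ℝ) : Set (ℝ × ℝ) :=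
  {p | l < p.1 ∧ p.1 < p.2 ∧ p.2 < u}

theorem convex_subintervals (l u : ℝ) : Convex ℝ (subintervals l u) := by
  have hl : Convex ℝ {p : ℝ × ℝ | l < p.1} :=
    convex_halfSpace_gt (LinearMap.fst ℝ ℝ ℝ).isLinear l
  have hu : Convex ℝ {p : ℝ × ℝ | p.2 < u} :=
    convex_halfSpace_lt (LinearMap.snd ℝ ℝ ℝ).isLinear u
  have hlt : Convex ℝ {p : ℝ × ℝ | p.1 < p.2} := by
    simpa using (convexOn_id convex_univ).convex_strict_epigraph
  exact hl.inter (hlt.inter hu)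

theorem continuousOn_cauchySchwarzDefect_subintervals {l u : ℝ} (hw : ContinuousOn w (Ioo l u))
    (hφ : ContinuousOn φ (Ioo l u)) (hφ₀ : ∀ x ∈ Ioo l u, φ x ≠ 0) :
    ContinuousOn (fun p : ℝ × ℝ ↦ cauchySchwarzDefect (volume.restrict (Ioc p.1 p.2)) w φ)
      (subintervals l u) := by
  have hsub : subintervals l u ⊆ Ioo l u ×ˢ Ioo l u := fun p ⟨hl, hlt, hu⟩ ↦
    ⟨⟨hl, hlt.trans hu⟩, hl.trans hlt, hu⟩
  have hint {f : ℝ → ℝ} (hf : ContinuousOn f (Ioo l u)) :=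
    (continuousOn_intervalIntegral_endpoints isOpen_Ioo hf).mono hsub
  exact (((hint (hw.div hφ hφ₀)).mul (hint (hφ.mul hw))).sub ((hint hw).pow 2)).congr
    fun p hp ↦ cauchySchwarzDefect_restrict_Ioc hp.2.1.le w φ

end Interval

section AffineFactor

variable {K c lam t x y : ℝ} {Q : ℝ → ℝ}

theorem one_add_mul_pos_of_lt (hlam : lam < 0) (hx : x < -1 / lam) : 0 < 1 + lam * x := by
  linarith [(lt_div_iff_of_neg hlam).1 hx]

theorem exists_mul_affine_sq_eq_mul_sq (hlam : lam < 0) (hK : 0 < K) (hc : 0 < c) :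
    ∃ t ∈ Ioo 0 (-1 / lam), K * (1 + lam * t) ^ 2 = -(c * lam) * t ^ 2 := by
  let f : ℝ → ℝ := fun x ↦ K * (1 + lam * x) ^ 2 - -(c * lam) * x ^ 2
  have hend : 0 < -1 / lam := div_pos_of_neg_of_neg neg_one_lt_zero hlam
  have hf₀ : 0 < f 0 := by simpa [f] using hK
  have hf₁ : f (-1 / lam) < 0 := by
    have hval : f (-1 / lam) = c / lam := by
      have := hlam.ne
      simp only [f]
      field_simp
      ring
    exact hval ▸ div_neg_of_pos_of_neg hc hlam
  obtain ⟨t, ht, heq⟩ := intermediate_value_Ioo' hend.le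
    (show Continuous f by fun_prop).continuousOn ⟨hf₁, hf₀⟩
  exact ⟨t, ht, sub_eq_zero.1 heq⟩

theorem mul_le_affine_mul_affine_of_le (hlam : lam < 0) (hK : 0 ≤ K) (hc : 0 ≤ c)
    (ht : K * (1 + lam * t) ^ 2 = -(c * lam) * t ^ 2) (htlt : t < -1 / lam)
    (hy : 0 < y) (hxt : x ≤ t) (hyt : y ≤ t) :
    -(c * lam) * (x * y) ≤ K * ((1 + lam * x) * (1 + lam * y)) := by
  have hu := one_add_mul_pos_of_lt hlam htlt
  have hux : 1 + lam * t ≤ 1 + lam * x := by nlinarith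
  have huy : 1 + lam * t ≤ 1 + lam * y := by nlinarith
  have hcl : 0 ≤ -(c * lam) := by nlinarith
  have ht₀ : 0 ≤ t := hy.le.trans hyt
  have hux₀ : 0 ≤ 1 + lam * x := hu.le.trans hux
  calc -(c * lam) * (x * y) ≤ -(c * lam) * (t * t) := by gcongr
    _ = K * ((1 + lam * t) * (1 + lam * t)) := by linear_combination -ht
    _ ≤ K * ((1 + lam * x) * (1 + lam * y)) := by gcongr

theorem affine_mul_affine_le_mul_of_le (hlam : lam < 0) (hK : 0 ≤ K) (hc : 0 ≤ c)
    (ht : K * (1 + lam * t) ^ 2 = -(c * lam) * t ^ 2) (ht₀ : 0 < t)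
    (hy : y < -1 / lam) (htx : t ≤ x) (hty : t ≤ y) :
    K * ((1 + lam * x) * (1 + lam * y)) ≤ -(c * lam) * (x * y) := by
  have hu := one_add_mul_pos_of_lt hlam hy
  have hux : 1 + lam * x ≤ 1 + lam * t := by nlinarith
  have huy : 1 + lam * y ≤ 1 + lam * t := by nlinarith
  have hcl : 0 ≤ -(c * lam) := by nlinarith
  have hut : 0 ≤ 1 + lam * t := hu.le.trans huy
  have hx₀ : 0 ≤ x := ht₀.le.trans htx
  calc K * ((1 + lam * x) * (1 + lam * y)) ≤ K * ((1 + lam * t) * (1 + lam * t)) := by gcongr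
    _ = -(c * lam) * (t * t) := by linear_combination ht
    _ ≤ -(c * lam) * (x * y) := by gcongr

theorem defectKernel_id_sub_defectKernel_affine (hx : x ≠ 0) (hy : y ≠ 0)
    (hux : 1 + lam * x ≠ 0) (huy : 1 + lam * y ≠ 0) :
    K * defectKernel id x y - -(c / lam) * defectKernel (fun x ↦ 1 + lam * x) x y =
      (x - y) ^ 2 / (x * y * ((1 + lam * x) * (1 + lam * y))) *
        (K * ((1 + lam * x) * (1 + lam * y)) - -(c * lam) * (x * y)) := by
  have hsub : 1 + lam * x - (1 + lam * y) = lam * (x - y) := by ring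
  simp only [defectKernel, id, hsub]
  generalize 1 + lam * x = u at *
  generalize 1 + lam * y = v at *
  field_simp

theorem defectKernel_affine_le_defectKernel_id (hlam : lam < 0) (hx : x ∈ Ioo 0 (-1 / lam))
    (hy : y ∈ Ioo 0 (-1 / lam))
    (hle : -(c * lam) * (x * y) ≤ K * ((1 + lam * x) * (1 + lam * y))) :
    -(c / lam) * defectKernel (fun x ↦ 1 + lam * x) x y ≤ K * defectKernel id x y := by
  have hx₀ := hx.1
  have hy₀ := hy.1
  have hux := one_add_mul_pos_of_lt hlam hx.2
  have huy := one_add_mul_pos_of_lt hlam hy.2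
  rw [← sub_nonneg, defectKernel_id_sub_defectKernel_affine hx₀.ne' hy₀.ne' hux.ne' huy.ne']
  exact mul_nonneg (by positivity) (sub_nonneg.2 hle)

theorem defectKernel_id_le_defectKernel_affine (hlam : lam < 0) (hx : x ∈ Ioo 0 (-1 / lam))
    (hy : y ∈ Ioo 0 (-1 / lam))
    (hle : K * ((1 + lam * x) * (1 + lam * y)) ≤ -(c * lam) * (x * y)) :
    K * defectKernel id x y ≤ -(c / lam) * defectKernel (fun x ↦ 1 + lam * x) x y := by
  have hx₀ := hx.1
  have hy₀ := hy.1
  have hux := one_add_mul_pos_of_lt hlam hx.2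
  have huy := one_add_mul_pos_of_lt hlam hy.2
  rw [← sub_nonpos, defectKernel_id_sub_defectKernel_affine hx₀.ne' hy₀.ne' hux.ne' huy.ne']
  exact mul_nonpos_of_nonneg_of_nonpos (by positivity) (sub_nonpos.2 hle)

theorem exists_cauchySchwarzDefect_affine_le_id (hlam : lam < 0) (hK : 0 < K) (hc : 0 < c)
    (hQ : ContinuousOn Q (Ioo 0 (-1 / lam))) (hQ₀ : ∀ x ∈ Ioo 0 (-1 / lam), 0 ≤ Q x) :
    ∃ p ∈ subintervals 0 (-1 / lam),
      -(c / lam) * cauchySchwarzDefect (volume.restrict (Ioc p.1 p.2)) Q (fun x ↦ 1 + lam * x) ≤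
        K * cauchySchwarzDefect (volume.restrict (Ioc p.1 p.2)) Q id := by
  obtain ⟨t, ⟨ht₀, ht₁⟩, ht⟩ := exists_mul_affine_sq_eq_mul_sq hlam hK hc
  obtain ⟨a, ha₀, hat⟩ := exists_between ht₀
  have hsub : Icc a t ⊆ Ioo 0 (-1 / lam) := Icc_subset_Ioo ha₀ ht₁
  refine ⟨(a, t), ⟨ha₀, hat, ht₁⟩, const_mul_cauchySchwarzDefect_restrict_Ioc_le
    (hQ.mono hsub) (by fun_prop) continuousOn_id (fun x hx ↦ hQ₀ x (hsub hx))
    (fun x hx ↦ (one_add_mul_pos_of_lt hlam (hsub hx).2).ne') (fun x hx ↦ (hsub hx).1.ne')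
    fun x hx y hy ↦ defectKernel_affine_le_defectKernel_id hlam (hsub hx) (hsub hy)
      (mul_le_affine_mul_affine_of_le hlam hK.le hc.le ht ht₁ (hsub hy).1 hx.2 hy.2)⟩

theorem exists_cauchySchwarzDefect_id_le_affine (hlam : lam < 0) (hK : 0 < K) (hc : 0 < c)
    (hQ : ContinuousOn Q (Ioo 0 (-1 / lam))) (hQ₀ : ∀ x ∈ Ioo 0 (-1 / lam), 0 ≤ Q x) :
    ∃ p ∈ subintervals 0 (-1 / lam),
      K * cauchySchwarzDefect (volume.restrict (Ioc p.1 p.2)) Q id ≤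
        -(c / lam) *
          cauchySchwarzDefect (volume.restrict (Ioc p.1 p.2)) Q (fun x ↦ 1 + lam * x) := by
  obtain ⟨t, ⟨ht₀, ht₁⟩, ht⟩ := exists_mul_affine_sq_eq_mul_sq hlam hK hc
  obtain ⟨b, htb, hb₁⟩ := exists_between ht₁
  have hsub : Icc t b ⊆ Ioo 0 (-1 / lam) := Icc_subset_Ioo ht₀ hb₁
  refine ⟨(t, b), ⟨ht₀, htb, hb₁⟩, const_mul_cauchySchwarzDefect_restrict_Ioc_le
    (hQ.mono hsub) continuousOn_id (by fun_prop) (fun x hx ↦ hQ₀ x (hsub hx))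
    (fun x hx ↦ (hsub hx).1.ne') (fun x hx ↦ (one_add_mul_pos_of_lt hlam (hsub hx).2).ne')
    fun x hx y hy ↦ defectKernel_id_le_defectKernel_affine hlam (hsub hx) (hsub hy)
      (affine_mul_affine_le_mul_of_le hlam hK.le hc.le ht ht₀ (hsub hy).2 hx.1 hy.1)⟩

theorem exists_cauchySchwarzDefect_id_eq_affine (hlam : lam < 0) (hK : 0 < K) (hc : 0 < c)
    (hQ : ContinuousOn Q (Ioo 0 (-1 / lam))) (hQ₀ : ∀ x ∈ Ioo 0 (-1 / lam), 0 ≤ Q x) :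
    ∃ p ∈ subintervals 0 (-1 / lam),
      K * cauchySchwarzDefect (volume.restrict (Ioc p.1 p.2)) Q id =
        -(c / lam) *
          cauchySchwarzDefect (volume.restrict (Ioc p.1 p.2)) Q (fun x ↦ 1 + lam * x) := by
  obtain ⟨p, hp, hlep⟩ := exists_cauchySchwarzDefect_id_le_affine hlam hK hc hQ hQ₀
  obtain ⟨q, hq, hleq⟩ := exists_cauchySchwarzDefect_affine_le_id hlam hK hc hQ hQ₀
  have hid := continuousOn_cauchySchwarzDefect_subintervals hQ continuousOn_id
    fun x hx ↦ hx.1.ne'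
  have haffine := continuousOn_cauchySchwarzDefect_subintervals hQ
    (φ := fun x ↦ 1 + lam * x) (by fun_prop) fun x hx ↦ (one_add_mul_pos_of_lt hlam hx.2).ne'
  exact (convex_subintervals 0 (-1 / lam)).isPreconnected.intermediate_value₂ hp hq
    (hid.const_mul K) (haffine.const_mul (-(c / lam))) hlep hleq

end AffineFactor

theorem stmt_17_general {lam K c : ℝ} {Q : ℝ → ℝ} (hlam : lam < 0) (hK : 0 < K) (hc : 0 < c)
    (hQ : ContinuousOn Q (Ioo 0 (-1 / lam))) (hQ₀ : ∀ x ∈ Ioo 0 (-1 / lam), 0 ≤ Q x) :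
    ∃ a b : ℝ, 0 < a ∧ a < b ∧ b < -1 / lam ∧
      K * ((∫ x in a..b, Q x / x) * (∫ x in a..b, x * Q x) - (∫ x in a..b, Q x) ^ 2) =
        c * (-(1 / lam) * (∫ x in a..b, Q x / (1 + lam * x)) * (∫ x in a..b, (1 + lam * x) * Q x)
          + (1 / lam) * (∫ x in a..b, Q x) ^ 2) := by
  obtain ⟨⟨a, b⟩, ⟨ha, hab, hb⟩, heq⟩ :=
    exists_cauchySchwarzDefect_id_eq_affine hlam hK hc hQ hQ₀
  refine ⟨a, b, ha, hab, hb, ?_⟩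
  simp only [cauchySchwarzDefect_restrict_Ioc hab.le, id] at heq
  rw [heq]
  ring

/-- For every `c_M > 0` there exist `0 < a < b < -1/λ` such that
`n(n-1)·H₁(a,b) = c_M·H₂(a,b)`. -/
theorem stmt_17 (m n : ℕ) (hm : 1 ≤ m) (hn : 2 ≤ n) (lam : ℝ) (hlam : lam < 0)
    (Q : ℝ → ℝ)
    (hQ : ∀ x : ℝ, Q x = (1 + lam * x) ^ m * x ^ (n - 1))
    (c_M : ℝ) (hcM : 0 < c_M) :
    ∃ a b : ℝ, 0 < a ∧ a < b ∧ b < -1 / lam ∧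
      (n : ℝ) * ((n : ℝ) - 1) *
        ((∫ x in a..b, Q x / x) * (∫ x in a..b, x * Q x)
          - (∫ x in a..b, Q x) ^ 2)
      = c_M *
        (-(1 / lam) * (∫ x in a..b, Q x / (1 + lam * x))
            * (∫ x in a..b, (1 + lam * x) * Q x)
          + (1 / lam) * (∫ x in a..b, Q x) ^ 2) := by
  have hn' : (1 : ℝ) < n := mod_cast hn
  obtain rfl : Q = fun x ↦ (1 + lam * x) ^ m * x ^ (n - 1) := funext hQ
  exact stmt_17_general hlam (by nlinarith) hcM (by fun_prop) fun x hx ↦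
    mul_nonneg (pow_nonneg (one_add_mul_pos_of_lt hlam hx.2).le _) (pow_nonneg hx.1.le _)
end

section
/- For every real number c_M there exist real numbers a, b with 0 < a < b < −1/λ such that n(n−1)·H₁(a,b) + L₁(a,b) = c_M·H₂(a,b). -/
/-!
The three terms of the equation are quadratic in `Q`. `H₁` is the Gram determinant of `1` and `x`
for the density `Q / x`; since an affine change of `x` only rescales such a determinant, `H₂` is
`-λ` times the one for the density `Q / (1 + λ x)`; and `L₁ = -Q(b) ∫ (b - x) Q`.
Substituting `x = a + h t` with `h = b - a`, the Gram determinants are of order `h ^ 4` and `L₁` is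
`-h ^ 2 Q(a) ^ 2 / 2` to leading order, so the difference of the two sides is negative for `b` close
to `a > 0`. For `a = 0` and `Q = w x ^ (n - 1)`, where `w = (1 + λ x) ^ m`, the difference is
`b ^ (2 n)` times a function of `b` which vanishes at `0` and has derivative
`-2 w(0) w'(0) / (n (n + 1) (n + 2)) > 0` there: the `c_M` term contributes only to second order.
Hence the difference is positive for `a = 0` and some small `b`, so also for small `a > 0` and the
same `b`, and the intermediate value theorem in `b` gives a zero.
-/

open Filter Topology Set

/-- The Gram determinant of the functions `1` and `q` in `L²` of the density `f` on `[a, b]`. -/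
noncomputable def gramDet (q f : ℝ → ℝ) (a b : ℝ) : ℝ :=
  (∫ x in a..b, f x) * (∫ x in a..b, q x ^ 2 * f x) - (∫ x in a..b, q x * f x) ^ 2

section GramDet

theorem integral_div_mul_integral_mul_sub_sq {q f g : ℝ → ℝ} {a b : ℝ}
    (hq : ∀ x ∈ uIcc a b, q x ≠ 0) (hg : ∀ x ∈ uIcc a b, g x = q x * f x) :
    (∫ x in a..b, g x / q x) * (∫ x in a..b, q x * g x) - (∫ x in a..b, g x) ^ 2
      = gramDet q f a b := by
  have hdiv : ∫ x in a..b, g x / q x = ∫ x in a..b, f x :=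
    intervalIntegral.integral_congr fun x hx => by
      simp only [hg x hx, mul_div_cancel_left₀ _ (hq x hx)]
  have hmul : ∫ x in a..b, q x * g x = ∫ x in a..b, q x ^ 2 * f x :=
    intervalIntegral.integral_congr fun x hx => by
      simp only [hg x hx]
      ring
  rw [hdiv, hmul, intervalIntegral.integral_congr hg, gramDet]

theorem gramDet_add_const_mul {q f : ℝ → ℝ} (hq : Continuous q) (hf : Continuous f)
    (α β a b : ℝ) : gramDet (fun x => α + β * q x) f a b = β ^ 2 * gramDet q f a b := by
  have hint {g : ℝ → ℝ} (hg : Continuous g) : IntervalIntegrable g MeasureTheory.volume a b :=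
    hg.intervalIntegrable a b
  have hfirst : ∫ x in a..b, (α + β * q x) * f x
      = α * (∫ x in a..b, f x) + β * ∫ x in a..b, q x * f x := by
    rw [← intervalIntegral.integral_const_mul, ← intervalIntegral.integral_const_mul,
      ← intervalIntegral.integral_add (hint (by fun_prop)) (hint (by fun_prop))]
    exact intervalIntegral.integral_congr fun x _ => by ring
  have hsecond : ∫ x in a..b, (α + β * q x) ^ 2 * f x
      = α ^ 2 * (∫ x in a..b, f x) + 2 * α * β * (∫ x in a..b, q x * f x)
        + β ^ 2 * ∫ x in a..b, q x ^ 2 * f x := by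
    simp only [← intervalIntegral.integral_const_mul]
    rw [← intervalIntegral.integral_add (hint (by fun_prop)) (hint (by fun_prop)),
      ← intervalIntegral.integral_add (hint (by fun_prop)) (hint (by fun_prop))]
    exact intervalIntegral.integral_congr fun x _ => by ring
  rw [gramDet, gramDet, hfirst, hsecond]
  ring

theorem integral_add_right_eq_mul_integral_unit (f : ℝ → ℝ) (a h : ℝ) :
    ∫ x in a..a + h, f x = h * ∫ t in (0 : ℝ)..1, f (a + h * t) := by
  simp [intervalIntegral.mul_integral_comp_add_mul]

theorem gramDet_id_add_right {f : ℝ → ℝ} (hf : Continuous f) (a h : ℝ) :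
    gramDet id f a (a + h) = h ^ 4 * gramDet id (fun t => f (a + h * t)) 0 1 := by
  have hsubst : gramDet id f a (a + h)
      = h ^ 2 * gramDet (fun t => a + h * id t) (fun t => f (a + h * t)) 0 1 := by
    simp only [gramDet, integral_add_right_eq_mul_integral_unit, id]
    ring
  rw [hsubst, gramDet_add_const_mul continuous_id (by fun_prop)]
  ring

theorem continuous_gramDet {X : Type*} [TopologicalSpace X] [FirstCountableTopology X]
    {q : ℝ → ℝ} {f : X → ℝ → ℝ} (hq : Continuous q) (hf : Continuous (Function.uncurry f))
    (a b : ℝ) : Continuous fun x => gramDet q (f x) a b := by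
  have hint (i : ℕ) : Continuous fun x => ∫ t in a..b, q t ^ i * f x t :=
    intervalIntegral.continuous_parametric_intervalIntegral_of_continuous' (by fun_prop) a b
  have h₀ := hint 0
  have h₁ := hint 1
  simp only [pow_zero, pow_one, one_mul] at h₀ h₁
  exact (h₀.mul (hint 2)).sub (h₁.pow 2)

end GramDet

/-- The difference of the two sides of the equation: `p = n (n - 1)` and `r = c_M λ` are the
coefficients of the Gram determinants coming from `H₁` and `H₂`, whose densities `f = Q / x` and
`g = Q / (1 + λ x)` are kept independent of `Q`, and the last term is `L₁`. -/
noncomputable def curvatureDefect (p r : ℝ) (f g Q : ℝ → ℝ) (a b : ℝ) : ℝ :=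
  p * gramDet id f a b + r * gramDet id g a b - Q b * ∫ x in a..b, (b - x) * Q x

section CurvatureDefect

variable {f g Q : ℝ → ℝ}

theorem curvatureDefect_add_right (p r : ℝ) (hf : Continuous f) (hg : Continuous g) (a h : ℝ) :
    curvatureDefect p r f g Q a (a + h) = h ^ 2 *
      (h ^ 2 * (p * gramDet id (fun t => f (a + h * t)) 0 1
          + r * gramDet id (fun t => g (a + h * t)) 0 1)
        - Q (a + h) * ∫ t in (0 : ℝ)..1, (1 - t) * Q (a + h * t)) := by
  have hbdry : ∫ x in a..a + h, (a + h - x) * Q x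
      = h ^ 2 * ∫ t in (0 : ℝ)..1, (1 - t) * Q (a + h * t) := by
    have hpoint (t : ℝ) : (a + h - (a + h * t)) * Q (a + h * t)
        = h * ((1 - t) * Q (a + h * t)) := by ring
    simp only [integral_add_right_eq_mul_integral_unit, hpoint,
      intervalIntegral.integral_const_mul]
    ring
  rw [curvatureDefect, gramDet_id_add_right hf, gramDet_id_add_right hg, hbdry]
  ring

theorem exists_continuous_curvatureDefect_eq_sq_mul (p r : ℝ) (hf : Continuous f)
    (hg : Continuous g) (hQ : Continuous Q) :
    ∃ R : ℝ × ℝ → ℝ, Continuous R ∧ (∀ a, R (a, 0) = -(Q a ^ 2 / 2)) ∧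
      ∀ a b, curvatureDefect p r f g Q a b = (b - a) ^ 2 * R (a, b - a) := by
  refine ⟨fun z => z.2 ^ 2 * (p * gramDet id (fun t => f (z.1 + z.2 * t)) 0 1
      + r * gramDet id (fun t => g (z.1 + z.2 * t)) 0 1)
    - Q (z.1 + z.2) * ∫ t in (0 : ℝ)..1, (1 - t) * Q (z.1 + z.2 * t), ?_, fun a => ?_,
    fun a b => ?_⟩
  · have hF := continuous_gramDet (f := fun (z : ℝ × ℝ) t => f (z.1 + z.2 * t))
      continuous_id (by fun_prop) 0 1
    have hG := continuous_gramDet (f := fun (z : ℝ × ℝ) t => g (z.1 + z.2 * t))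
      continuous_id (by fun_prop) 0 1
    have hI : Continuous fun z : ℝ × ℝ => ∫ t in (0 : ℝ)..1, (1 - t) * Q (z.1 + z.2 * t) :=
      intervalIntegral.continuous_parametric_intervalIntegral_of_continuous' (by fun_prop) 0 1
    exact ((continuous_snd.pow 2).mul ((hF.const_mul p).add (hG.const_mul r))).sub
      ((hQ.comp (continuous_fst.add continuous_snd)).mul hI)
  · have hhalf : ∫ t in (0 : ℝ)..1, (1 - t) = 1 / 2 := by
      rw [intervalIntegral.integral_sub (by simp) (by simp)]
      norm_num
    simp only [zero_mul, add_zero, intervalIntegral.integral_mul_const, hhalf]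
    ring
  · simpa only [add_sub_cancel] using curvatureDefect_add_right p r hf hg a (b - a)

theorem continuous_curvatureDefect (p r : ℝ) (hf : Continuous f) (hg : Continuous g)
    (hQ : Continuous Q) : Continuous fun z : ℝ × ℝ => curvatureDefect p r f g Q z.1 z.2 := by
  obtain ⟨R, hR, -, hdefect⟩ := exists_continuous_curvatureDefect_eq_sq_mul p r hf hg hQ
  simp only [hdefect]
  fun_prop

theorem eventually_curvatureDefect_neg (p r : ℝ) (hf : Continuous f) (hg : Continuous g)
    (hQ : Continuous Q) {a : ℝ} (ha : Q a ≠ 0) :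
    ∀ᶠ b in 𝓝[>] a, curvatureDefect p r f g Q a b < 0 := by
  obtain ⟨R, hR, hdiag, hdefect⟩ := exists_continuous_curvatureDefect_eq_sq_mul p r hf hg hQ
  have hRa : R (a, a - a) < 0 := by
    rw [sub_self, hdiag]
    have := sq_pos_of_ne_zero ha
    linarith
  have hRb : Continuous fun b => R (a, b - a) := by fun_prop
  filter_upwards [(hRb.continuousAt.eventually_lt_const hRa).filter_mono nhdsWithin_le_nhds,
    self_mem_nhdsWithin] with b hb hab
  rw [hdefect]
  exact mul_neg_of_pos_of_neg (pow_pos (sub_pos.2 hab) 2) hb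

theorem exists_curvatureDefect_eq_zero_of_pos {p r ε : ℝ} (hf : Continuous f)
    (hg : Continuous g) (hQ : Continuous Q) (hQ0 : ∀ᶠ a in 𝓝[>] 0, Q a ≠ 0)
    (hpos : ∀ᶠ b in 𝓝[>] 0, 0 < curvatureDefect p r f g Q 0 b) (hε : 0 < ε) :
    ∃ a b : ℝ, 0 < a ∧ a < b ∧ b < ε ∧ curvatureDefect p r f g Q a b = 0 := by
  have hcont := continuous_curvatureDefect p r hf hg hQ
  obtain ⟨b₁, hb₁, hb₁0, hb₁ε⟩ := (hpos.and (Ioo_mem_nhdsGT hε)).exists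
  have hposa : ∀ᶠ a in 𝓝[>] (0 : ℝ), 0 < curvatureDefect p r f g Q a b₁ := by
    have hconta : Continuous fun a => curvatureDefect p r f g Q a b₁ :=
      hcont.comp (Continuous.prodMk_left b₁)
    exact (hconta.continuousAt.eventually_const_lt hb₁).filter_mono nhdsWithin_le_nhds
  obtain ⟨a, ha, hQa, ha0, hab₁⟩ := (hposa.and (hQ0.and (Ioo_mem_nhdsGT hb₁0))).exists
  obtain ⟨b₂, hb₂, hab₂, hb₂₁⟩ :=
    ((eventually_curvatureDefect_neg p r hf hg hQ hQa).and (Ioo_mem_nhdsGT hab₁)).exists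
  have hcontb : Continuous fun b => curvatureDefect p r f g Q a b :=
    hcont.comp (Continuous.prodMk_right a)
  obtain ⟨b, ⟨hb₂b, hbb₁⟩, hb⟩ :=
    intermediate_value_Icc hb₂₁.le hcontb.continuousOn ⟨hb₂.le, ha.le⟩
  exact ⟨a, b, ha0, hab₂.trans_le hb₂b, hbb₁.trans_lt hb₁ε, hb⟩

end CurvatureDefect

section PowerDensity

theorem hasDerivAt_const_add_mul_of_continuousAt {ρ : ℝ → ℝ} (hρ : ContinuousAt ρ 0) (y : ℝ) :
    HasDerivAt (fun b => y + b * ρ b) (ρ 0) 0 := by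
  rw [hasDerivAt_iff_tendsto_slope_zero]
  refine (hρ.tendsto.mono_left nhdsWithin_le_nhds).congr' ?_
  filter_upwards [self_mem_nhdsWithin] with b hb
  simp [inv_mul_cancel_left₀ (show b ≠ 0 from hb)]

variable {w' : ℝ} {w v : ℝ → ℝ}

theorem hasDerivAt_integral_mul_comp_mul {φ : ℝ → ℝ} (hφ : Continuous φ) (hw : Continuous w)
    (hw' : HasDerivAt w w' 0) (x y : ℝ) :
    HasDerivAt (fun b => ∫ t in x..y, φ t * w (b * t)) (w' * ∫ t in x..y, φ t * t) 0 := by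
  -- Only differentiability at `0` is available, so the integrand is written as
  -- `φ t * (w 0 + b * t * dslope w 0 (b * t))` instead of differentiating under the integral.
  have hslope : Continuous (dslope w 0) := by
    rw [← continuousOn_univ, continuousOn_dslope univ_mem]
    exact ⟨hw.continuousOn, hw'.differentiableAt⟩
  have hρ : Continuous fun b => ∫ t in x..y, φ t * t * dslope w 0 (b * t) :=
    intervalIntegral.continuous_parametric_intervalIntegral_of_continuous' (by fun_prop) x y
  have hexpand (b : ℝ) : ∫ t in x..y, φ t * w (b * t)
      = (∫ t in x..y, φ t * w 0) + b * ∫ t in x..y, φ t * t * dslope w 0 (b * t) := by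
    rw [← intervalIntegral.integral_const_mul,
      ← intervalIntegral.integral_add (Continuous.intervalIntegrable (by fun_prop) _ _)
        (Continuous.intervalIntegrable (by fun_prop) _ _)]
    refine intervalIntegral.integral_congr fun t _ => ?_
    have := sub_smul_dslope w 0 (b * t)
    simp only [sub_zero, smul_eq_mul] at this
    linear_combination -φ t * this
  simp only [hexpand]
  refine (hasDerivAt_const_add_mul_of_continuousAt hρ.continuousAt _).congr_deriv ?_
  simp only [zero_mul, dslope_same, hw'.deriv, intervalIntegral.integral_mul_const]
  ring

/-- The `i`-th moment over `[0, 1]` of the rescaled density `t ↦ w (b t)`; it describes the `i`-th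
moment of `w` over `[0, b]` without its vanishing factor `b ^ (i + 1)`. -/
noncomputable def scaledMoment (w : ℝ → ℝ) (i : ℕ) (b : ℝ) : ℝ :=
  ∫ t in (0 : ℝ)..1, t ^ i * w (b * t)

theorem scaledMoment_zero_right (w : ℝ → ℝ) (i : ℕ) : scaledMoment w i 0 = w 0 / (i + 1) := by
  simp [scaledMoment, integral_pow, div_eq_inv_mul]

theorem continuous_scaledMoment (hw : Continuous w) (i : ℕ) : Continuous (scaledMoment w i) :=
  intervalIntegral.continuous_parametric_intervalIntegral_of_continuous' (by fun_prop) 0 1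

theorem hasDerivAt_scaledMoment_zero (hw : Continuous w) (hw' : HasDerivAt w w' 0) (i : ℕ) :
    HasDerivAt (scaledMoment w i) (w' / (i + 2)) 0 := by
  refine (hasDerivAt_integral_mul_comp_mul (continuous_pow i) hw hw' 0 1).congr_deriv ?_
  simp only [← pow_succ, integral_pow]
  push_cast
  simp [div_eq_mul_inv, add_assoc, one_add_one_eq_two]

theorem integral_pow_mul_eq_pow_mul_scaledMoment (w : ℝ → ℝ) (i : ℕ) (b : ℝ) :
    ∫ x in (0 : ℝ)..b, x ^ i * w x = b ^ (i + 1) * scaledMoment w i b := by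
  have hsubst := integral_add_right_eq_mul_integral_unit (fun x => x ^ i * w x) 0 b
  simp only [zero_add, mul_pow, mul_assoc, intervalIntegral.integral_const_mul] at hsubst
  rw [hsubst, scaledMoment]
  ring

theorem gramDet_id_mul_pow_zero_left (w : ℝ → ℝ) (k : ℕ) (b : ℝ) :
    gramDet id (fun x => w x * x ^ k) 0 b = b ^ (2 * k + 4) *
      (scaledMoment w k b * scaledMoment w (k + 2) b - scaledMoment w (k + 1) b ^ 2) := by
  have hmoment (i : ℕ) : ∫ x in (0 : ℝ)..b, x ^ i * (w x * x ^ k)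
      = b ^ (k + i + 1) * scaledMoment w (k + i) b := by
    rw [← integral_pow_mul_eq_pow_mul_scaledMoment]
    congr 1
    funext x
    ring
  have h₀ := hmoment 0
  have h₁ := hmoment 1
  simp only [pow_zero, pow_one, one_mul, add_zero] at h₀ h₁
  simp only [gramDet, id, h₀, h₁, hmoment 2]
  ring

theorem curvatureDefect_zero_left (p r : ℝ) (hw : Continuous w) (k : ℕ) (b : ℝ) :
    curvatureDefect p r (fun x => w x * x ^ k) (fun x => v x * x ^ (k + 1))
        (fun x => w x * x ^ (k + 1)) 0 b = b ^ (2 * k + 4) *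
      (p * (scaledMoment w k b * scaledMoment w (k + 2) b - scaledMoment w (k + 1) b ^ 2)
        - w b * (scaledMoment w (k + 1) b - scaledMoment w (k + 2) b)
        + b ^ 2 * (r * (scaledMoment v (k + 1) b * scaledMoment v (k + 3) b
          - scaledMoment v (k + 2) b ^ 2))) := by
  have hbdry : ∫ x in (0 : ℝ)..b, (b - x) * (w x * x ^ (k + 1))
      = b ^ (k + 3) * (scaledMoment w (k + 1) b - scaledMoment w (k + 2) b) := by
    have hsplit (x : ℝ) : (b - x) * (w x * x ^ (k + 1))
        = b * (x ^ (k + 1) * w x) - x ^ (k + 2) * w x := by ring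
    simp only [hsplit]
    rw [intervalIntegral.integral_sub (Continuous.intervalIntegrable (by fun_prop) _ _)
        (Continuous.intervalIntegrable (by fun_prop) _ _), intervalIntegral.integral_const_mul,
      integral_pow_mul_eq_pow_mul_scaledMoment, integral_pow_mul_eq_pow_mul_scaledMoment]
    ring
  rw [curvatureDefect, gramDet_id_mul_pow_zero_left, gramDet_id_mul_pow_zero_left, hbdry]
  ring

theorem hasDerivAt_sq_mul_of_continuousAt {ρ : ℝ → ℝ} (hρ : ContinuousAt ρ 0) :
    HasDerivAt (fun b => b ^ 2 * ρ b) 0 0 := by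
  have h := hasDerivAt_const_add_mul_of_continuousAt (continuousAt_id.mul hρ) 0
  simpa [sq, mul_assoc] using h

theorem hasDerivAt_scaledMoment_defect_zero (hw : Continuous w) (hw' : HasDerivAt w w' 0) (k : ℕ) :
    HasDerivAt (fun b => ((k : ℝ) + 2) * (k + 1) *
        (scaledMoment w k b * scaledMoment w (k + 2) b - scaledMoment w (k + 1) b ^ 2)
        - w b * (scaledMoment w (k + 1) b - scaledMoment w (k + 2) b))
      (-(2 * w 0 * w') / ((k + 2) * (k + 3) * (k + 4))) 0 := by
  have hμ := hasDerivAt_scaledMoment_zero hw hw'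
  refine (((((hμ k).mul (hμ (k + 2))).sub ((hμ (k + 1)).pow 2)).const_mul _).sub
    (hw'.mul ((hμ (k + 1)).sub (hμ (k + 2))))).congr_deriv ?_
  simp only [Pi.sub_apply, scaledMoment_zero_right]
  push_cast
  field_simp
  ring

theorem eventually_curvatureDefect_zero_left_pos (r : ℝ) (hw : Continuous w) (hv : Continuous v)
    (hw' : HasDerivAt w w' 0) (hneg : w 0 * w' < 0) (k : ℕ) :
    ∀ᶠ b in 𝓝[>] (0 : ℝ), 0 < curvatureDefect (((k : ℝ) + 2) * (k + 1)) r
      (fun x => w x * x ^ k) (fun x => v x * x ^ (k + 1)) (fun x => w x * x ^ (k + 1)) 0 b := by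
  have hρ : Continuous fun b => r * (scaledMoment v (k + 1) b * scaledMoment v (k + 3) b
      - scaledMoment v (k + 2) b ^ 2) := by
    have := continuous_scaledMoment hv
    fun_prop
  have hderiv := (hasDerivAt_scaledMoment_defect_zero hw hw' k).add
    (hasDerivAt_sq_mul_of_continuousAt hρ.continuousAt)
  have hderiv_pos : 0 < -(2 * w 0 * w') / (((k : ℝ) + 2) * (k + 3) * (k + 4)) + 0 := by
    rw [add_zero]
    exact div_pos (by linarith) (by positivity)
  have hleading : ((k : ℝ) + 2) * (k + 1) *
      (scaledMoment w k 0 * scaledMoment w (k + 2) 0 - scaledMoment w (k + 1) 0 ^ 2)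
      - w 0 * (scaledMoment w (k + 1) 0 - scaledMoment w (k + 2) 0) = 0 := by
    simp only [scaledMoment_zero_right]
    push_cast
    field_simp
    ring
  have hsign := eventually_nhdsWithin_sign_eq_of_deriv_pos (hderiv.deriv.symm ▸ hderiv_pos)
    (by simp [hleading])
  filter_upwards [hsign.filter_mono nhdsWithin_le_nhds, self_mem_nhdsWithin] with b hb hb0
  rw [sub_zero, sign_pos (show 0 < b from hb0), sign_eq_one_iff] at hb
  rw [curvatureDefect_zero_left _ r hw]
  exact mul_pos (pow_pos hb0 _) hb

theorem exists_curvatureDefect_eq_zero (r : ℝ) (hw : Continuous w) (hv : Continuous v)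
    (hw' : HasDerivAt w w' 0) (hneg : w 0 * w' < 0) (k : ℕ) {ε : ℝ} (hε : 0 < ε) :
    ∃ a b : ℝ, 0 < a ∧ a < b ∧ b < ε ∧ curvatureDefect (((k : ℝ) + 2) * (k + 1)) r
      (fun x => w x * x ^ k) (fun x => v x * x ^ (k + 1)) (fun x => w x * x ^ (k + 1)) a b = 0 := by
  refine exists_curvatureDefect_eq_zero_of_pos (by fun_prop) (by fun_prop) (by fun_prop) ?_
    (eventually_curvatureDefect_zero_left_pos r hw hv hw' hneg k) hε
  have hw0 : w 0 ≠ 0 := left_ne_zero_of_mul hneg.ne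
  filter_upwards [(hw.continuousAt.eventually_ne hw0).filter_mono nhdsWithin_le_nhds,
    self_mem_nhdsWithin] with a ha ha0
  exact mul_ne_zero ha (pow_ne_zero _ (ne_of_gt ha0))

end PowerDensity

theorem neg_inv_mul_integral_add_inv_mul_sq_eq_gramDet {l a b : ℝ} {g Q : ℝ → ℝ} (hl : l ≠ 0)
    (hg : Continuous g) (hne : ∀ x ∈ uIcc a b, 1 + l * x ≠ 0)
    (hQ : ∀ x ∈ uIcc a b, Q x = (1 + l * x) * g x) :
    -(1 / l) * (∫ x in a..b, Q x / (1 + l * x)) * (∫ x in a..b, (1 + l * x) * Q x)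
        + (1 / l) * (∫ x in a..b, Q x) ^ 2 = -l * gramDet id g a b := by
  have hgram := integral_div_mul_integral_mul_sub_sq hne hQ
  have haffine : gramDet (fun x => 1 + l * x) g a b = l ^ 2 * gramDet id g a b :=
    gramDet_add_const_mul continuous_id hg 1 l a b
  rw [haffine] at hgram
  have hcancel : 1 / l * l ^ 2 = l := by field_simp
  linear_combination -(1 / l) * hgram - gramDet id g a b * hcancel

theorem mul_integral_sub_mul_integral_eq_neg {Q : ℝ → ℝ} (hQ : Continuous Q) (a b : ℝ) :
    Q b * (∫ x in a..b, x * Q x) - b * Q b * (∫ x in a..b, Q x)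
      = -(Q b * ∫ x in a..b, (b - x) * Q x) := by
  simp only [sub_mul]
  rw [intervalIntegral.integral_sub (Continuous.intervalIntegrable (by fun_prop) _ _)
    (Continuous.intervalIntegrable (by fun_prop) _ _), intervalIntegral.integral_const_mul]
  ring

theorem sub_eq_curvatureDefect {f g Q : ℝ → ℝ} {p c l a b : ℝ} (hl : l ≠ 0)
    (hg : Continuous g) (hQ : Continuous Q) (hx : ∀ x ∈ uIcc a b, x ≠ 0)
    (hlx : ∀ x ∈ uIcc a b, 1 + l * x ≠ 0) (hf : ∀ x ∈ uIcc a b, Q x = x * f x)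
    (hQg : ∀ x ∈ uIcc a b, Q x = (1 + l * x) * g x) :
    p * ((∫ x in a..b, Q x / x) * (∫ x in a..b, x * Q x) - (∫ x in a..b, Q x) ^ 2)
      + (Q b * (∫ x in a..b, x * Q x) - b * Q b * (∫ x in a..b, Q x))
      - c * (-(1 / l) * (∫ x in a..b, Q x / (1 + l * x)) * (∫ x in a..b, (1 + l * x) * Q x)
          + (1 / l) * (∫ x in a..b, Q x) ^ 2)
      = curvatureDefect p (c * l) f g Q a b := by
  have hH₁ : (∫ x in a..b, Q x / x) * (∫ x in a..b, x * Q x) - (∫ x in a..b, Q x) ^ 2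
      = gramDet id f a b := integral_div_mul_integral_mul_sub_sq hx hf
  rw [hH₁, mul_integral_sub_mul_integral_eq_neg hQ,
    neg_inv_mul_integral_add_inv_mul_sq_eq_gramDet hl hg hlx hQg, curvatureDefect]
  ring

theorem exists_continuous_eventually_eq_mul {X : Type*} [TopologicalSpace X] {q w : X → ℝ} {x : X}
    (hq : Continuous q) (hw : Continuous w) (hqx : 0 < q x) :
    ∃ v : X → ℝ, Continuous v ∧ ∀ᶠ y in 𝓝 x, q y ≠ 0 ∧ w y = q y * v y := by
  refine ⟨fun y => w y / max (q y) (q x / 2),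
    hw.div (by fun_prop) fun y => (lt_max_of_lt_right (half_pos hqx)).ne', ?_⟩
  filter_upwards [hq.continuousAt.eventually_const_lt (half_lt_self hqx)] with y hy
  have hqy : q y ≠ 0 := ((half_pos hqx).trans hy).ne'
  exact ⟨hqy, by rw [max_eq_left hy.le, mul_div_cancel₀ _ hqy]⟩

theorem stmt_18_general {n : ℕ} (hn : 2 ≤ n) {lam : ℝ} (hlam : lam ≠ 0) {w : ℝ → ℝ} {w' : ℝ}
    (hw : Continuous w) (hw' : HasDerivAt w w' 0) (hneg : w 0 * w' < 0) {Q : ℝ → ℝ}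
    (hQ : ∀ x : ℝ, Q x = w x * x ^ (n - 1)) (c_M : ℝ) {ε : ℝ} (hε : 0 < ε) :
    ∃ a b : ℝ, 0 < a ∧ a < b ∧ b < ε ∧
      (n : ℝ) * ((n : ℝ) - 1) *
        ((∫ x in a..b, Q x / x) * (∫ x in a..b, x * Q x)
          - (∫ x in a..b, Q x) ^ 2)
      + (Q b * (∫ x in a..b, x * Q x) - b * Q b * (∫ x in a..b, Q x))
      = c_M *
        (-(1 / lam) * (∫ x in a..b, Q x / (1 + lam * x))
            * (∫ x in a..b, (1 + lam * x) * Q x)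
          + (1 / lam) * (∫ x in a..b, Q x) ^ 2) := by
  obtain ⟨k, rfl⟩ := Nat.exists_eq_add_of_le' hn
  obtain rfl : Q = fun x => w x * x ^ (k + 1) := funext hQ
  -- `Q x / (1 + lam * x)` need not be continuous, so it is replaced by a continuous function which
  -- agrees with it near `0`, and `b` is taken small.
  obtain ⟨v, hv, hevent⟩ := exists_continuous_eventually_eq_mul (q := fun x => 1 + lam * x)
    (x := 0) (by fun_prop) hw (by simp)
  obtain ⟨δ, hδ, hwv⟩ := Metric.eventually_nhds_iff.1 hevent
  obtain ⟨a, b, ha, hab, hb, hzero⟩ :=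
    exists_curvatureDefect_eq_zero (c_M * lam) hw hv hw' hneg k (lt_min hε hδ)
  have hpos {x : ℝ} (hx : x ∈ uIcc a b) : 0 < x := by
    rw [uIcc_of_le hab.le] at hx
    exact ha.trans_le hx.1
  have hnear {x : ℝ} (hx : x ∈ uIcc a b) : 1 + lam * x ≠ 0 ∧ w x = (1 + lam * x) * v x := by
    refine hwv ?_
    rw [Real.dist_0_eq_abs, abs_of_pos (hpos hx)]
    rw [uIcc_of_le hab.le] at hx
    exact (hx.2.trans_lt hb).trans_le (min_le_right _ _)
  refine ⟨a, b, ha, hab, hb.trans_le (min_le_left _ _), ?_⟩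
  rw [← sub_eq_zero, ← hzero, ← sub_eq_curvatureDefect hlam (by fun_prop) (by fun_prop)
    (fun x hx => (hpos hx).ne') (fun x hx => (hnear hx).1) (fun x _ => by ring)
    (fun x hx => by rw [(hnear hx).2, mul_assoc])]
  push_cast
  ring

/-- For every `c_M` there exist `0 < a < b < -1/λ` such that
`n(n-1)·H₁(a,b) + L₁(a,b) = c_M·H₂(a,b)`. -/
theorem stmt_18 (m n : ℕ) (hm : 1 ≤ m) (hn : 2 ≤ n) (lam : ℝ) (hlam : lam < 0)
    (Q : ℝ → ℝ)
    (hQ : ∀ x : ℝ, Q x = (1 + lam * x) ^ m * x ^ (n - 1))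
    (c_M : ℝ) :
    ∃ a b : ℝ, 0 < a ∧ a < b ∧ b < -1 / lam ∧
      (n : ℝ) * ((n : ℝ) - 1) *
        ((∫ x in a..b, Q x / x) * (∫ x in a..b, x * Q x)
          - (∫ x in a..b, Q x) ^ 2)
      + (Q b * (∫ x in a..b, x * Q x) - b * Q b * (∫ x in a..b, Q x))
      = c_M *
        (-(1 / lam) * (∫ x in a..b, Q x / (1 + lam * x))
            * (∫ x in a..b, (1 + lam * x) * Q x)
          + (1 / lam) * (∫ x in a..b, Q x) ^ 2) := by
  have hderiv : HasDerivAt (fun x => (1 + lam * x) ^ m) (m * lam) 0 := by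
    simpa using (((hasDerivAt_id (0 : ℝ)).const_mul lam).const_add 1).fun_pow m
  exact stmt_18_general hn hlam.ne (by fun_prop) hderiv
    (by simpa using mul_neg_of_pos_of_neg (Nat.cast_pos.2 hm) hlam) hQ c_M
    (div_pos_of_neg_of_neg neg_one_lt_zero hlam)
end

section
/- Let m ≥ 1 and n ≥ 2 be integers and λ > 0 a real number. For real numbers a, b with 0 < a < b, define Q(x) = (1+λx)^m·x^(n−1), H₁(a,b) = (∫ₐᵇ Q(x)/x dx)·(∫ₐᵇ x·Q(x) dx) − (∫ₐᵇ Q(x) dx)², H₂(a,b) = −(1/λ)·(∫ₐᵇ Q(x)/(1+λx) dx)·(∫ₐᵇ (1+λx)·Q(x) dx) + (1/λ)·(∫ₐᵇ Q(x) dx)², and L₁(a,b) = Q(b)·∫ₐᵇ x·Q(x) dx − b·Q(b)·∫ₐᵇ Q(x) dx. Then n(n−1)·H₁(a,b) + L₁(a,b) < m·(m+2n−1)·λ·H₂(a,b). -/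
/-!
Write `K(b)` for the left side minus the right side. It is a combination of the Cauchy–Schwarz gaps
`(∫ Q/p) (∫ p Q) - (∫ Q)²` for `p = x` and `p = 1 + λx`, plus `Q(b) ∫ (x - b) Q`, so `K(a) = 0` and
it suffices that `K' < 0`. With `β = Q'/Q`, differentiating gives
`K'(t) = Q(t) ∫ₐᵗ Q(x) (k(x, t) - β(t)(t - x) - 1) dx`, where `k(x, t)` is the corresponding
combination of the kernels `(p(t) - p(x))² / (p(x) p(t))`. For the given coefficients, `k(x, t)` is
at most `(β(x) - β(t)) (t - x) + β(x) β(t) (t - x)²`, and after this replacement the integrand is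
the exact derivative of `Q(x) (t - x) (1 + β(t)(t - x))`, which vanishes at `x = t` and is positive
at `x = a`.
-/

open Set Filter MeasureTheory

/-- The defect in the Cauchy–Schwarz inequality `(∫ Q)² ≤ (∫ Q / p) (∫ p Q)` on `[a, b]`. The
paper's `H₁` is the case `p x = x`, and `-λ H₂` is the case `p x = 1 + λ x`. -/
noncomputable def cauchySchwarzGap (Q p : ℝ → ℝ) (a b : ℝ) : ℝ :=
  (∫ x in a..b, Q x / p x) * (∫ x in a..b, p x * Q x) - (∫ x in a..b, Q x) ^ 2

@[simp]
lemma cauchySchwarzGap_self (Q p : ℝ → ℝ) (a : ℝ) : cauchySchwarzGap Q p a a = 0 := by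
  simp [cauchySchwarzGap]

section Interval

variable {s : Set ℝ} {f Q β p : ℝ → ℝ} {a b t B : ℝ}

lemma continuousOn_sq_sub_div_mul (hp : ContinuousOn p s) (hp₀ : ∀ x ∈ s, p x ≠ 0) (ht : t ∈ s) :
    ContinuousOn (fun x => (p t - p x) ^ 2 / (p x * p t)) s :=
  ContinuousOn.div (by fun_prop) (by fun_prop) fun x hx => mul_ne_zero (hp₀ x hx) (hp₀ t ht)

variable [OrdConnected s]

lemma intervalIntegrable_of_continuousOn (hf : ContinuousOn f s) (ha : a ∈ s) (hb : b ∈ s) :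
    IntervalIntegrable f volume a b :=
  (hf.mono (OrdConnected.uIcc_subset ‹_› ha hb)).intervalIntegrable

lemma hasDerivAt_integral_of_continuousOn (hs : IsOpen s) (hf : ContinuousOn f s)
    (ha : a ∈ s) (ht : t ∈ s) : HasDerivAt (fun u => ∫ x in a..u, f x) (f t) t :=
  intervalIntegral.integral_hasDerivAt_right (intervalIntegrable_of_continuousOn hf ha ht)
    (hf.stronglyMeasurableAtFilter hs t ht) (hf.continuousAt (hs.mem_nhds ht))

lemma integral_sub_mul (hQ : ContinuousOn Q s) (ha : a ∈ s) (hb : b ∈ s) (c : ℝ) :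
    ∫ x in a..b, (x - c) * Q x = (∫ x in a..b, x * Q x) - c * ∫ x in a..b, Q x := by
  have hxQ : IntervalIntegrable (fun x => x * Q x) volume a b :=
    intervalIntegrable_of_continuousOn (continuousOn_id.mul hQ) ha hb
  simp only [sub_mul]
  rw [intervalIntegral.integral_sub hxQ ((intervalIntegrable_of_continuousOn hQ ha hb).const_mul c),
    intervalIntegral.integral_const_mul]

lemma hasDerivAt_integral_sub_mul (hs : IsOpen s) (hQ : ContinuousOn Q s) (ha : a ∈ s)
    (ht : t ∈ s) :
    HasDerivAt (fun u => ∫ x in a..u, (x - u) * Q x) (-∫ x in a..t, Q x) t := by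
  have hsplit : (fun u => ∫ x in a..u, (x - u) * Q x)
      =ᶠ[nhds t] fun u => (∫ x in a..u, x * Q x) - u * ∫ x in a..u, Q x :=
    eventually_of_mem (hs.mem_nhds ht) fun u hu => integral_sub_mul hQ ha hu u
  have h₁ := hasDerivAt_integral_of_continuousOn hs (continuousOn_id.mul hQ) ha ht
  have h₀ := hasDerivAt_integral_of_continuousOn hs hQ ha ht
  refine ((h₁.sub ((hasDerivAt_id t).mul h₀)).congr_deriv ?_).congr_of_eventuallyEq hsplit
  simp only [Pi.mul_apply, id]
  ring

lemma hasDerivAt_cauchySchwarzGap (hs : IsOpen s) (hQ : ContinuousOn Q s) (hp : ContinuousOn p s)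
    (hp₀ : ∀ x ∈ s, p x ≠ 0) (ha : a ∈ s) (ht : t ∈ s) :
    HasDerivAt (cauchySchwarzGap Q p a)
      (Q t * ∫ x in a..t, Q x * ((p t - p x) ^ 2 / (p x * p t))) t := by
  have hQp : ContinuousOn (fun x => Q x / p x) s := hQ.div hp hp₀
  have hpQ : ContinuousOn (fun x => p x * Q x) s := hp.mul hQ
  have hexpand : ∫ x in a..t, Q x * ((p t - p x) ^ 2 / (p x * p t))
      = p t * (∫ x in a..t, Q x / p x) + (p t)⁻¹ * (∫ x in a..t, p x * Q x)
        - 2 * ∫ x in a..t, Q x := by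
    have iQp := (intervalIntegrable_of_continuousOn hQp ha ht).const_mul (p t)
    have ipQ := (intervalIntegrable_of_continuousOn hpQ ha ht).const_mul (p t)⁻¹
    have iQ := (intervalIntegrable_of_continuousOn hQ ha ht).const_mul 2
    simp only [← intervalIntegral.integral_const_mul]
    rw [← intervalIntegral.integral_add iQp ipQ, ← intervalIntegral.integral_sub (iQp.add ipQ) iQ]
    refine intervalIntegral.integral_congr fun x hx => ?_
    have := hp₀ x (OrdConnected.uIcc_subset ‹_› ha ht hx)
    have := hp₀ t ht
    field_simp
    ring
  refine (((hasDerivAt_integral_of_continuousOn hs hQp ha ht).mul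
    (hasDerivAt_integral_of_continuousOn hs hpQ ha ht)).sub
    ((hasDerivAt_integral_of_continuousOn hs hQ ha ht).fun_pow 2)).congr_deriv ?_
  rw [hexpand]
  ring

lemma integral_logDeriv_kernel
    (hQ : ∀ x ∈ s, HasDerivAt Q (Q x * β x) x) (hβ : ContinuousOn β s) (ha : a ∈ s) (hb : b ∈ s) :
    ∫ x in a..b, Q x * ((β x - B) * (b - x) + β x * B * (b - x) ^ 2 - B * (b - x) - 1)
      = -(Q a * ((b - a) * (1 + B * (b - a)))) := by
  have hQc : ContinuousOn Q s := HasDerivAt.continuousOn hQ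
  have hderiv : ∀ x ∈ uIcc a b, HasDerivAt (fun x => Q x * ((b - x) * (1 + B * (b - x))))
      (Q x * ((β x - B) * (b - x) + β x * B * (b - x) ^ 2 - B * (b - x) - 1)) x := by
    intro x hx
    have hlin : HasDerivAt (fun x => b - x) (-1) x := (hasDerivAt_id x).const_sub b
    refine ((hQ x (OrdConnected.uIcc_subset ‹_› ha hb hx)).mul
      (hlin.mul ((hlin.const_mul B).const_add 1))).congr_deriv ?_
    simp only [Pi.mul_apply]
    ring
  rw [intervalIntegral.integral_eq_sub_of_hasDerivAt hderiv
    (intervalIntegrable_of_continuousOn (by fun_prop) ha hb)]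
  simp

section Sum

variable {ι : Type*} [Fintype ι] {c : ι → ℝ} {P : ι → ℝ → ℝ}

lemma hasDerivAt_sum_cauchySchwarzGap_add (hs : IsOpen s)
    (hQ : ∀ x ∈ s, HasDerivAt Q (Q x * β x) x) (hP : ∀ i, ContinuousOn (P i) s)
    (hP₀ : ∀ i, ∀ x ∈ s, P i x ≠ 0) (ha : a ∈ s) (ht : t ∈ s) :
    HasDerivAt
      (fun u => ∑ i, c i * cauchySchwarzGap Q (P i) a u + Q u * ∫ x in a..u, (x - u) * Q x)
      (Q t * ∫ x in a..t, Q x *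
        (∑ i, c i * ((P i t - P i x) ^ 2 / (P i x * P i t)) - β t * (t - x) - 1)) t := by
  have hQc : ContinuousOn Q s := HasDerivAt.continuousOn hQ
  have hkernel (i : ι) :
      ContinuousOn (fun x => c i * (Q x * ((P i t - P i x) ^ 2 / (P i x * P i t)))) s :=
    continuousOn_const.mul (hQc.mul (continuousOn_sq_sub_div_mul (hP i) (hP₀ i) ht))
  have hexpand : ∫ x in a..t, Q x *
        (∑ i, c i * ((P i t - P i x) ^ 2 / (P i x * P i t)) - β t * (t - x) - 1)
      = ∑ i, c i * (∫ x in a..t, Q x * ((P i t - P i x) ^ 2 / (P i x * P i t)))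
        + β t * (∫ x in a..t, (x - t) * Q x) - ∫ x in a..t, Q x := by
    have imoment : IntervalIntegrable (fun x => β t * ((x - t) * Q x)) volume a t :=
      intervalIntegrable_of_continuousOn (by fun_prop) ha ht
    have isum := intervalIntegrable_of_continuousOn
      (continuousOn_finsetSum Finset.univ fun i _ => hkernel i) ha ht
    simp only [← intervalIntegral.integral_const_mul]
    rw [← intervalIntegral.integral_finsetSum fun i _ =>
        intervalIntegrable_of_continuousOn (hkernel i) ha ht,
      ← intervalIntegral.integral_add isum imoment,
      ← intervalIntegral.integral_sub (isum.add imoment)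
        (intervalIntegrable_of_continuousOn hQc ha ht)]
    refine intervalIntegral.integral_congr fun x _ => ?_
    simp only [mul_left_comm (c _) (Q x), ← Finset.mul_sum]
    ring
  refine ((HasDerivAt.fun_sum fun i _ =>
    (hasDerivAt_cauchySchwarzGap hs hQc (hP i) (hP₀ i) ha ht).const_mul (c i)).add
    ((hQ t ht).mul (hasDerivAt_integral_sub_mul hs hQc ha ht))).congr_deriv ?_
  rw [hexpand]
  simp only [mul_left_comm (c _) (Q t), ← Finset.mul_sum]
  ring

lemma integral_kernel_neg (hQpos : ∀ x ∈ s, 0 < Q x)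
    (hQ : ∀ x ∈ s, HasDerivAt Q (Q x * β x) x) (hβ : ContinuousOn β s) (hB : 0 ≤ B)
    {k : ℝ → ℝ} (hk : ContinuousOn k s) (ha : a ∈ s) (hb : b ∈ s) (hab : a < b)
    (hle : ∀ x ∈ s, k x ≤ (β x - B) * (b - x) + β x * B * (b - x) ^ 2) :
    ∫ x in a..b, Q x * (k x - B * (b - x) - 1) < 0 := by
  have hQc : ContinuousOn Q s := HasDerivAt.continuousOn hQ
  calc ∫ x in a..b, Q x * (k x - B * (b - x) - 1)
      ≤ ∫ x in a..b, Q x * ((β x - B) * (b - x) + β x * B * (b - x) ^ 2 - B * (b - x) - 1) := by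
        refine intervalIntegral.integral_mono_on hab.le
          (intervalIntegrable_of_continuousOn (by fun_prop) ha hb)
          (intervalIntegrable_of_continuousOn (by fun_prop) ha hb) fun x hx => ?_
        have hxs : x ∈ s := OrdConnected.out ‹_› ha hb hx
        have := (hQpos x hxs).le
        gcongr
        exact hle x hxs
    _ = -(Q a * ((b - a) * (1 + B * (b - a)))) := integral_logDeriv_kernel hQ hβ ha hb
    _ < 0 := by
        have := hQpos a ha
        have := sub_pos.2 hab
        exact neg_neg_of_pos (by positivity)

theorem sum_cauchySchwarzGap_add_neg (hs : IsOpen s) (hQpos : ∀ x ∈ s, 0 < Q x)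
    (hQ : ∀ x ∈ s, HasDerivAt Q (Q x * β x) x) (hβ : ContinuousOn β s) (hβ₀ : ∀ x ∈ s, 0 ≤ β x)
    (hP : ∀ i, ContinuousOn (P i) s) (hP₀ : ∀ i, ∀ x ∈ s, P i x ≠ 0)
    (hle : ∀ x ∈ s, ∀ t ∈ s, ∑ i, c i * ((P i t - P i x) ^ 2 / (P i x * P i t))
      ≤ (β x - β t) * (t - x) + β x * β t * (t - x) ^ 2)
    (ha : a ∈ s) (hb : b ∈ s) (hab : a < b) :
    ∑ i, c i * cauchySchwarzGap Q (P i) a b + Q b * ∫ x in a..b, (x - b) * Q x < 0 := by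
  let K : ℝ → ℝ := fun u =>
    ∑ i, c i * cauchySchwarzGap Q (P i) a u + Q u * ∫ x in a..u, (x - u) * Q x
  have hsub : Icc a b ⊆ s := OrdConnected.out ‹_› ha hb
  have hK {t : ℝ} (ht : t ∈ s) := hasDerivAt_sum_cauchySchwarzGap_add (c := c) hs hQ hP hP₀ ha ht
  have hanti : StrictAntiOn K (Icc a b) := by
    refine strictAntiOn_of_deriv_neg (convex_Icc a b)
      (fun t ht => (hK (hsub ht)).continuousAt.continuousWithinAt) fun t ht => ?_
    rw [interior_Icc] at ht
    have hts : t ∈ s := hsub (Ioo_subset_Icc_self ht)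
    rw [(hK hts).deriv]
    refine mul_neg_of_pos_of_neg (hQpos t hts) (integral_kernel_neg hQpos hQ hβ (hβ₀ t hts)
      ?_ ha hts ht.1 fun x hx => hle x hx t hts)
    exact continuousOn_finsetSum _ fun i _ =>
      continuousOn_const.mul (continuousOn_sq_sub_div_mul (hP i) (hP₀ i) hts)
  simpa [K] using hanti (left_mem_Icc.2 hab.le) (right_mem_Icc.2 hab.le) hab

end Sum

end Interval

section AffineRpow

variable {m n l x t : ℝ}

lemma hasDerivAt_affine_rpow_mul_rpow (m k : ℝ) (hx : x ≠ 0) (hlx : 1 + l * x ≠ 0) :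
    HasDerivAt (fun x => (1 + l * x) ^ m * x ^ k)
      ((1 + l * x) ^ m * x ^ k * (k / x + m * l / (1 + l * x))) x := by
  have haff : HasDerivAt (fun x => 1 + l * x) l x := by
    simpa using ((hasDerivAt_id x).const_mul l).const_add 1
  refine ((haff.rpow_const (p := m) (.inl hlx)).mul
    (Real.hasDerivAt_rpow_const (.inl hx))).congr_deriv ?_
  rw [Real.rpow_sub_one hlx, Real.rpow_sub_one hx]
  field_simp
  ring

/- The difference of the two sides is
`m (n - 1) (t - x)² (λ / (t (1 + λx)) + λ / (x (1 + λt)) - 2 λ² / ((1 + λx) (1 + λt)))`, and the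
last factor is nonnegative since `λ / (1 + λx) < 1 / x`. -/
lemma affine_kernel_le (hm : 0 ≤ m) (hn : 1 ≤ n) (hl : 0 ≤ l) (hx : 0 < x) (ht : 0 < t) :
    n * (n - 1) * ((t - x) ^ 2 / (x * t))
      + m * (m + 2 * n - 1) * (((1 + l * t) - (1 + l * x)) ^ 2 / ((1 + l * x) * (1 + l * t)))
    ≤ (((n - 1) / x + m * l / (1 + l * x)) - ((n - 1) / t + m * l / (1 + l * t))) * (t - x)
      + ((n - 1) / x + m * l / (1 + l * x)) * ((n - 1) / t + m * l / (1 + l * t))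
        * (t - x) ^ 2 := by
  have hlx : 0 < 1 + l * x := by positivity
  have hlt : 0 < 1 + l * t := by positivity
  have hn' : 0 ≤ n - 1 := sub_nonneg.2 hn
  have hdiff : 0 ≤ m * (n - 1) * (t - x) ^ 2 *
      (l * (x + t) / (x * t * (1 + l * x) * (1 + l * t))) := by positivity
  refine sub_nonneg.1 (hdiff.trans_eq ?_)
  field_simp
  ring

lemma affine_rpow_cauchySchwarzGap_add_neg {a b : ℝ} {Q : ℝ → ℝ} (hm : 0 ≤ m) (hn : 1 ≤ n)
    (hl : 0 ≤ l) (ha : 0 < a) (hab : a < b)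
    (hQ : ∀ x, 0 < x → Q x = (1 + l * x) ^ m * x ^ (n - 1)) :
    n * (n - 1) * cauchySchwarzGap Q (fun x => x) a b
      + m * (m + 2 * n - 1) * cauchySchwarzGap Q (fun x => 1 + l * x) a b
      + Q b * ((∫ x in a..b, x * Q x) - b * ∫ x in a..b, Q x) < 0 := by
  have hb : b ∈ Ioi (0 : ℝ) := ha.trans hab
  have hx₀ : ∀ x ∈ Ioi (0 : ℝ), x ≠ 0 := fun x hx => ne_of_gt hx
  have haff : ∀ x ∈ Ioi (0 : ℝ), 0 < 1 + l * x := fun x (hx : 0 < x) => by positivity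
  have haff₀ : ∀ x ∈ Ioi (0 : ℝ), 1 + l * x ≠ 0 := fun x hx => (haff x hx).ne'
  have haffc : ContinuousOn (fun x => 1 + l * x) (Ioi 0) := by fun_prop
  have hQpos : ∀ x ∈ Ioi (0 : ℝ), 0 < Q x := fun x hx => by
    rw [hQ x hx]
    exact mul_pos (Real.rpow_pos_of_pos (haff x hx) m) (Real.rpow_pos_of_pos hx _)
  have hQ' : ∀ x ∈ Ioi (0 : ℝ),
      HasDerivAt Q (Q x * ((n - 1) / x + m * l / (1 + l * x))) x := fun x hx => by
    rw [hQ x hx]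
    exact (hasDerivAt_affine_rpow_mul_rpow m (n - 1) (hx₀ x hx) (haff₀ x hx)).congr_of_eventuallyEq
      (eventually_of_mem (Ioi_mem_nhds hx) hQ)
  have hβ : ContinuousOn (fun x => (n - 1) / x + m * l / (1 + l * x)) (Ioi 0) :=
    (continuousOn_const.div continuousOn_id hx₀).add (continuousOn_const.div haffc haff₀)
  have hβ₀ : ∀ x ∈ Ioi (0 : ℝ), 0 ≤ (n - 1) / x + m * l / (1 + l * x) := fun x hx =>
    add_nonneg (div_nonneg (sub_nonneg.2 hn) (le_of_lt hx))
      (div_nonneg (mul_nonneg hm hl) (haff x hx).le)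
  have hK := sum_cauchySchwarzGap_add_neg (c := ![n * (n - 1), m * (m + 2 * n - 1)])
    (P := ![fun x => x, fun x => 1 + l * x]) isOpen_Ioi hQpos hQ' hβ hβ₀
    (Fin.forall_fin_two.2 ⟨continuousOn_id, haffc⟩) (Fin.forall_fin_two.2 ⟨hx₀, haff₀⟩)
    (fun x hx t ht => by simpa using affine_kernel_le hm hn hl hx ht) ha hb hab
  rw [integral_sub_mul (HasDerivAt.continuousOn hQ') ha hb] at hK
  simpa [Fin.sum_univ_two] using hK

end AffineRpow

theorem stmt_19_general {m n lam a b : ℝ} (hm : 0 ≤ m) (hn : 1 ≤ n) (hlam : 0 < lam)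
    (ha : 0 < a) (hab : a < b) {Q : ℝ → ℝ}
    (hQ : ∀ x, 0 < x → Q x = (1 + lam * x) ^ m * x ^ (n - 1)) :
    n * (n - 1) *
        ((∫ x in a..b, Q x / x) * (∫ x in a..b, x * Q x) - (∫ x in a..b, Q x) ^ 2)
      + (Q b * (∫ x in a..b, x * Q x) - b * Q b * (∫ x in a..b, Q x))
    < m * (m + 2 * n - 1) * lam *
        (-(1 / lam) * (∫ x in a..b, Q x / (1 + lam * x)) * (∫ x in a..b, (1 + lam * x) * Q x)
          + (1 / lam) * (∫ x in a..b, Q x) ^ 2) := by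
  have hK := affine_rpow_cauchySchwarzGap_add_neg hm hn hlam.le ha hab hQ
  simp only [cauchySchwarzGap] at hK
  refine sub_neg.1 (hK.trans_eq' ?_)
  field_simp
  ring

/-- For `λ > 0` and `0 < a < b`:
`n(n-1)·H₁(a,b) + L₁(a,b) < m(m+2n-1)·λ·H₂(a,b)`. -/
theorem stmt_19 (m n : ℕ) (hm : 1 ≤ m) (hn : 2 ≤ n) (lam : ℝ) (hlam : 0 < lam)
    (a b : ℝ) (ha : 0 < a) (hab : a < b)
    (Q : ℝ → ℝ)
    (hQ : ∀ x : ℝ, Q x = (1 + lam * x) ^ m * x ^ (n - 1)) :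
    (n : ℝ) * ((n : ℝ) - 1) *
        ((∫ x in a..b, Q x / x) * (∫ x in a..b, x * Q x)
          - (∫ x in a..b, Q x) ^ 2)
      + (Q b * (∫ x in a..b, x * Q x) - b * Q b * (∫ x in a..b, Q x))
    < (m : ℝ) * ((m : ℝ) + 2 * (n : ℝ) - 1) * lam *
        (-(1 / lam) * (∫ x in a..b, Q x / (1 + lam * x))
            * (∫ x in a..b, (1 + lam * x) * Q x)
          + (1 / lam) * (∫ x in a..b, Q x) ^ 2) := by
  have hm' : (0 : ℝ) ≤ m := m.cast_nonneg
  have hn' : (1 : ℝ) ≤ n := by exact_mod_cast one_le_two.trans hn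
  refine stmt_19_general hm' hn' hlam ha hab fun x _ => ?_
  rw [hQ, ← Nat.cast_pred (by lia), Real.rpow_natCast, Real.rpow_natCast]
end
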